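/- Every τ-tilting-finite quasitilted algebra over an algebraically closed field K is representation-finite. -/

import Mathlib

/- Formalization of statements from
   "Report on the finiteness of silting objects"
   by T. Aihara, T. Honma, K. Miyamoto, Q. Wang. -/

open CategoryTheory CategoryTheory.Limits

universe u v w

noncomputable section
namespace PaperSilting
/-! ### Module-theoretic notions.

We model right `Λ`-modules as left modules over the opposite ring; all the
definitions below are stated for left modules over a ring `R` and are applied
with `R := Λᵐᵒᵖ`. -/

/-- The category of `R`-modules (in `Type 0`). -/
abbrev ModCat (R : Type) [Ring R] := ModuleCat.{0} R

variable {R : Type} [Ring R]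

/-- The module object `M` is finitely generated. -/
def IsFGMod {R : Type} [Ring R] (M : ModCat R) : Prop := Module.Finite R M

/-- Indecomposable module object. -/
def IsIndecMod {R : Type} [Ring R] (M : ModCat R) : Prop :=
  ¬ IsZero M ∧ ∀ A B : ModCat R, Nonempty (M ≅ A ⊞ B) → IsZero A ∨ IsZero B

/-- `N` belongs to `add M`, i.e. `N` is a direct summand of a finite direct sum
of copies of `M`. -/
def MemAddMod {R : Type} [Ring R] (N M : ModCat R) : Prop :=
  ∃ (k : ℕ) (g : N ⟶ ⨁ (fun _ : Fin k => M)) (h : (⨁ (fun _ : Fin k => M)) ⟶ N),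
    g ≫ h = 𝟙 N

/-- A basic module: it has no direct summand of the form `N ⊕ N` with `N ≠ 0`. -/
def IsBasicMod {R : Type} [Ring R] (M : ModCat R) : Prop :=
  ∀ N X : ModCat R, Nonempty (M ≅ (N ⊞ N) ⊞ X) → IsZero N

/-- `M` is τ-rigid, i.e. `Hom(M, τM) = 0`: there is a projective presentation
`P₁ → P₀ → M → 0` by finitely generated projectives such that
`Hom(P₀, M) → Hom(P₁, M)` is surjective (Adachi–Iyama–Reiten). -/
def IsTauRigidMod {R : Type} [Ring R] (M : ModCat R) : Prop :=
  ∃ (P₁ P₀ : ModCat R) (f : P₁ ⟶ P₀) (g : P₀ ⟶ M),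
    Projective P₁ ∧ Projective P₀ ∧ IsFGMod P₁ ∧ IsFGMod P₀ ∧
    Function.Surjective g ∧ Function.Exact f g ∧
    ∀ h : P₁ ⟶ M, ∃ k : P₀ ⟶ M, f ≫ k = h

/-- A τ-rigid pair `(M, P)`: `M` is a τ-rigid module and `P` is a finitely
generated projective with `Hom(P, M) = 0`. -/
def IsTauRigidPairMod {R : Type} [Ring R] (M P : ModCat R) : Prop :=
  IsFGMod M ∧ IsTauRigidMod M ∧ IsFGMod P ∧ Projective P ∧ ∀ f : P ⟶ M, f = 0

/-- `M` is a support τ-tilting module: `(M, P)` is a maximal τ-rigid pair for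
some projective `P` (Adachi–Iyama–Reiten; equivalently, `M` is the `0`-th
cohomology of a two-term silting complex in `K^b(proj)`). -/
def IsSupportTauTiltingMod {R : Type} [Ring R] (M : ModCat R) : Prop :=
  ∃ P : ModCat R, IsTauRigidPairMod M P ∧
    ∀ N Q : ModCat R, IsTauRigidPairMod (M ⊞ N) (P ⊞ Q) → MemAddMod N M ∧ MemAddMod Q P

/-- The ring `R` admits only finitely many basic support τ-tilting modules up
to isomorphism. -/
def IsTauTiltingFiniteRing (R : Type) [Ring R] : Prop :=
  ∃ (n : ℕ) (f : Fin n → ModCat R),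
    ∀ M : ModCat R, IsSupportTauTiltingMod M → IsBasicMod M → ∃ i, Nonempty (M ≅ f i)

/-- The ring `R` admits only finitely many finitely generated indecomposable
modules up to isomorphism. -/
def IsRepFiniteRing (R : Type) [Ring R] : Prop :=
  ∃ (n : ℕ) (f : Fin n → ModCat R),
    ∀ M : ModCat R, IsFGMod M → IsIndecMod M → ∃ i, Nonempty (M ≅ f i)

/-- `R` has exactly `n` isomorphism classes of basic support τ-tilting modules. -/
def SupportTauTiltingCount (R : Type) [Ring R] (n : ℕ) : Prop :=
  ∃ f : Fin n → ModCat R,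
    (∀ i, IsSupportTauTiltingMod (f i) ∧ IsBasicMod (f i)) ∧
    (∀ i j, Nonempty (f i ≅ f j) → i = j) ∧
    (∀ M : ModCat R, IsSupportTauTiltingMod M → IsBasicMod M → ∃ i, Nonempty (M ≅ f i))

/-- An algebra `Λ` is τ-tilting-finite (with respect to right modules,
i.e. left `Λᵐᵒᵖ`-modules). -/
def IsTauTiltingFinite (Λ : Type) [Ring Λ] : Prop := IsTauTiltingFiniteRing Λᵐᵒᵖ

/-- An algebra `Λ` is representation-finite (with respect to right modules). -/
def IsRepFinite (Λ : Type) [Ring Λ] : Prop := IsRepFiniteRing Λᵐᵒᵖ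
/-! ### Quasitilted algebras. -/

/-- A witness that `Λ` is quasitilted: a hereditary abelian Hom-finite
`K`-category `H` together with a tilting object `T` whose endomorphism algebra
is `Λ`. -/
structure QuasitiltedWitness (K : Type) [Field K] (Λ : Type) [Ring Λ] [Algebra K Λ] where
  /-- the hereditary abelian category -/
  H : Type u
  [cat : Category.{v} H]
  [ab : Abelian H]
  [lin : Linear K H]
  /-- `H` is Hom-finite over `K` -/
  homFinite : ∀ X Y : H, FiniteDimensional K (X ⟶ Y)
  /-- `H` is hereditary: `Ext¹(Z, -)` is right exact, i.e. every short exact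
  sequence ending at `Z` lifts along an epimorphism `X ↠ Y` of first terms. -/
  hereditary : ∀ (X Y Z E : H) (g : X ⟶ Y) (i : Y ⟶ E) (p : E ⟶ Z) (w : i ≫ p = 0),
    Epi g → (ShortComplex.mk i p w).ShortExact →
    ∃ (E' : H) (i' : X ⟶ E') (p' : E' ⟶ Z) (w' : i' ≫ p' = 0) (φ : E' ⟶ E),
      (ShortComplex.mk i' p' w').ShortExact ∧ i' ≫ φ = g ≫ i ∧ φ ≫ p = p'
  /-- the tilting object -/
  T : H
  /-- `Ext¹(T, T) = 0`: every self-extension of `T` splits -/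
  selfExtVanish : ∀ (E : H) (i : T ⟶ E) (p : E ⟶ T) (w : i ≫ p = 0),
    (ShortComplex.mk i p w).ShortExact → ∃ s : T ⟶ E, s ≫ p = 𝟙 T
  /-- `T` generates: `Hom(T, X) = 0 = Ext¹(T, X)` forces `X = 0` -/
  generates : ∀ X : H, (∀ f : T ⟶ X, f = 0) →
    (∀ (E : H) (i : X ⟶ E) (p : E ⟶ T) (w : i ≫ p = 0),
       (ShortComplex.mk i p w).ShortExact → ∃ s : T ⟶ E, s ≫ p = 𝟙 T) →
    IsZero X
  /-- `Λ` is the endomorphism algebra of `T` as a `K`-algebra -/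
  endIso : ∃ φ : End T ≃+* Λ, ∀ k : K, φ (k • 𝟙 T) = algebraMap K Λ k

/-- `Λ` is a quasitilted algebra. -/
def IsQuasitilted (K : Type) [Field K] (Λ : Type) [Ring Λ] [Algebra K Λ] : Prop :=
  Nonempty (QuasitiltedWitness.{u, v} K Λ)
set_option linter.unusedSectionVars false
set_option linter.style.haveILetI false
set_option linter.unusedVariables false

/-- Properties of finite dimensional algebras used in the sequel. -/
class ArtAlg (R : Type) [Ring R] : Prop where
  artin : IsArtinianRing R
  approx : ∀ (M N : Type) [AddCommGroup M] [Module R M] [AddCommGroup N] [Module R N]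
    [Module.Finite R M] [Module.Finite R N],
    ∃ (n : ℕ) (h : Fin n → (M →ₗ[R] N)), ∀ g : M →ₗ[R] N,
      (∃ c : Fin n → (M →ₗ[R] M), g = ∑ i, h i ∘ₗ c i) ∧
      (∃ c : Fin n → (N →ₗ[R] N), g = ∑ i, c i ∘ₗ h i)
  nil : ∀ (M : Type) [AddCommGroup M] [Module R M] [Module.Finite R M],
    IsNilpotent (Ring.jacobson (Module.End R M))

attribute [instance] ArtAlg.artin

theorem ArtAlg.of_field (K : Type) [Field K] [Algebra K R] [FiniteDimensional K R] :
    ArtAlg R where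
  artin := IsArtinianRing.of_finite K R
  approx := by
    intro M N _ _ _ _ _ _
    letI : Module K M := Module.compHom M (algebraMap K R)
    letI : Module K N := Module.compHom N (algebraMap K R)
    haveI : IsScalarTower K R M := IsScalarTower.of_algebraMap_smul fun _ _ => rfl
    haveI : IsScalarTower K R N := IsScalarTower.of_algebraMap_smul fun _ _ => rfl
    haveI : Module.Finite K M := Module.Finite.trans R M
    haveI : Module.Finite K N := Module.Finite.trans R N
    haveI : SMulCommClass R K M := inferInstance
    haveI : SMulCommClass R K N := inferInstance
    haveI : Module.Finite K (M →ₗ[R] N) :=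
      Module.Finite.of_injective (LinearMap.restrictScalarsₗ K R M N K)
        (LinearMap.restrictScalars_injective K)
    obtain ⟨n, h, hh⟩ := Module.Finite.exists_fin (R := K) (M := M →ₗ[R] N)
    refine ⟨n, h, fun g => ?_⟩
    have hg : g ∈ Submodule.span K (Set.range h) := by rw [hh]; trivial
    obtain ⟨c, hc⟩ := (Submodule.mem_span_range_iff_exists_fun K).1 hg
    constructor
    · refine ⟨fun i => c i • LinearMap.id, ?_⟩
      rw [← hc]
      refine Finset.sum_congr rfl fun i _ => ?_
      ext x
      change c i • h i x = h i (c i • x)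
      rw [← algebraMap_smul R (c i) x, map_smul, algebraMap_smul]
    · refine ⟨fun i => c i • LinearMap.id, ?_⟩
      rw [← hc]
      rfl
  nil := by
    intro M _ _ _
    letI : Module K M := Module.compHom M (algebraMap K R)
    haveI : IsScalarTower K R M := IsScalarTower.of_algebraMap_smul fun _ _ => rfl
    haveI : Module.Finite K M := Module.Finite.trans R M
    haveI : SMulCommClass R K M := inferInstance
    haveI : Module.Finite K (M →ₗ[R] M) :=
      Module.Finite.of_injective (LinearMap.restrictScalarsₗ K R M M K)
        (LinearMap.restrictScalars_injective K)
    haveI : Module.Finite K (Module.End R M) := this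
    haveI : IsArtinianRing (Module.End R M) := IsArtinianRing.of_finite K _
    exact IsSemiprimaryRing.isNilpotent

section len
variable (R)
/-- length as a natural number -/
def len (M : Type*) [AddCommGroup M] [Module R M] : ℕ := (Module.length R M).toNat
variable {R} [ArtAlg R]
variable {M N : Type*} [AddCommGroup M] [Module R M] [AddCommGroup N] [Module R N]
  [Module.Finite R M] [Module.Finite R N]

theorem len_coe : ((len R M : ℕ) : ℕ∞) = Module.length R M :=
  ENat.natCast_toNat Module.length_ne_top

theorem len_le_inj (f : M →ₗ[R] N) (hf : Function.Injective f) : len R M ≤ len R N := by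
  have := Module.length_le_of_injective f hf
  rw [← len_coe, ← len_coe] at this
  exact_mod_cast this

theorem len_le_surj (f : M →ₗ[R] N) (hf : Function.Surjective f) : len R N ≤ len R M := by
  have := Module.length_le_of_surjective f hf
  rw [← len_coe, ← len_coe] at this
  exact_mod_cast this

theorem len_ker_range (f : M →ₗ[R] N) :
    len R M = len R (LinearMap.ker f) + len R (LinearMap.range f) := by
  have := Module.length_eq_add_of_exact (LinearMap.ker f).subtype f.rangeRestrict
    Subtype.val_injective f.surjective_rangeRestrict (by
      intro x
      rw [← Subtype.coe_inj]
      simp)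
  rw [← len_coe, ← len_coe, ← len_coe] at this
  exact_mod_cast this

theorem len_quot (A : Submodule R M) : len R M = len R A + len R (M ⧸ A) := by
  have := Module.length_eq_add_of_exact A.subtype A.mkQ
    Subtype.val_injective A.mkQ_surjective (by
      intro x; simp)
  rw [← len_coe, ← len_coe, ← len_coe] at this
  exact_mod_cast this

theorem len_eq_zero : len R M = 0 ↔ Subsingleton M := by
  rw [← Module.length_eq_zero_iff (R := R), ← len_coe]
  simp

theorem len_prod : len R (M × N) = len R M + len R N := by
  have := Module.length_prod (R := R) (M := M) (N := N)
  rw [← len_coe, ← len_coe, ← len_coe] at this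
  exact_mod_cast this

theorem surj_of_len (f : M →ₗ[R] N) (hf : Function.Injective f) (h : len R N ≤ len R M) :
    Function.Surjective f := by
  have h1 := len_quot (LinearMap.range f)
  have h2 := len_le_surj (LinearEquiv.ofInjective f hf).symm.toLinearMap
    (LinearEquiv.ofInjective f hf).symm.surjective
  have h3 : len R (N ⧸ LinearMap.range f) = 0 := by omega
  rw [len_eq_zero, Submodule.Quotient.subsingleton_iff] at h3
  exact LinearMap.range_eq_top.1 h3

theorem inj_of_len (f : M →ₗ[R] N) (h : len R M ≤ len R (LinearMap.range f)) :
    Function.Injective f := by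
  have h1 := len_ker_range f
  have h3 : len R (LinearMap.ker f) = 0 := by omega
  rw [len_eq_zero, Submodule.subsingleton_iff_eq_bot] at h3
  exact LinearMap.ker_eq_bot.1 h3

theorem len_lt_of_ne (A : Submodule R M) (h : A ≠ ⊤) : len R A < len R M := by
  by_contra h1
  apply h
  have := surj_of_len A.subtype Subtype.val_injective (by omega)
  rw [← LinearMap.range_eq_top, Submodule.range_subtype] at this
  exact this

end len

section approx
variable [ArtAlg R]
variable (M N : Type) [AddCommGroup M] [Module R M] [AddCommGroup N] [Module R N]
  [Module.Finite R M] [Module.Finite R N]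

theorem right_approx : ∃ (n : ℕ) (p : (Fin n → M) →ₗ[R] N),
    ∀ g : M →ₗ[R] N, ∃ c : M →ₗ[R] (Fin n → M), p ∘ₗ c = g := by
  obtain ⟨n, h, hh⟩ := ArtAlg.approx (R := R) M N
  refine ⟨n, ∑ i, h i ∘ₗ LinearMap.proj i, fun g => ?_⟩
  obtain ⟨c, hc⟩ := (hh g).1
  refine ⟨LinearMap.pi c, ?_⟩
  rw [hc]; ext x; simp

theorem left_approx : ∃ (n : ℕ) (p : N →ₗ[R] (Fin n → M)),
    ∀ g : N →ₗ[R] M, ∃ c : (Fin n → M) →ₗ[R] M, c ∘ₗ p = g := by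
  obtain ⟨n, h, hh⟩ := ArtAlg.approx (R := R) N M
  refine ⟨n, LinearMap.pi h, fun g => ?_⟩
  obtain ⟨c, hc⟩ := (hh g).2
  refine ⟨∑ i, c i ∘ₗ LinearMap.proj i, ?_⟩
  rw [hc]; ext x; simp
end approx


section basic
variable {P₁ P₀ U Z W E : Type} [AddCommGroup P₁] [Module R P₁] [AddCommGroup P₀] [Module R P₀]
  [AddCommGroup U] [Module R U] [AddCommGroup Z] [Module R Z] [AddCommGroup W] [Module R W]
  [AddCommGroup E] [Module R E]

/-- every map from the source extends along `f` -/
def Ev (f : P₁ →ₗ[R] P₀) (Z : Type) [AddCommGroup Z] [Module R Z] : Prop :=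
  ∀ h : P₁ →ₗ[R] Z, ∃ k : P₀ →ₗ[R] Z, k ∘ₗ f = h

/-- `Z` is generated by `U` -/
def Gen (R : Type) [Ring R] (U Z : Type) [AddCommGroup U] [Module R U]
    [AddCommGroup Z] [Module R Z] : Prop :=
  ∃ (n : ℕ) (p : (Fin n → U) →ₗ[R] Z), Function.Surjective p

/-- `N` is a summand of a finite power of `M` -/
def IsAdd (R : Type) [Ring R] (N M : Type) [AddCommGroup N] [Module R N]
    [AddCommGroup M] [Module R M] : Prop :=
  ∃ (k : ℕ) (g : N →ₗ[R] (Fin k → M)) (h : (Fin k → M) →ₗ[R] N), h ∘ₗ g = LinearMap.id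

/-- projective presentation -/
structure Pres (f : P₁ →ₗ[R] P₀) (g : P₀ →ₗ[R] U) : Prop where
  fin1 : Module.Finite R P₁
  fin0 : Module.Finite R P₀
  pr1 : Module.Projective R P₁
  pr0 : Module.Projective R P₀
  surj : Function.Surjective g
  exact : Function.Exact f g

/-- tau rigid modules -/
def TauRigid (R : Type) [Ring R] (U : Type) [AddCommGroup U] [Module R U] : Prop :=
  ∃ (P₁ P₀ : ModuleCat.{0} R) (f : P₁ →ₗ[R] P₀) (g : P₀ →ₗ[R] U), Pres f g ∧ Ev f U

theorem TauRigid.mk {f : P₁ →ₗ[R] P₀} {g : P₀ →ₗ[R] U} (h : Pres f g) (h' : Ev f U) :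
    TauRigid R U := ⟨ModuleCat.of R P₁, ModuleCat.of R P₀, f, g, h, h'⟩

theorem desc {f : P₁ →ₗ[R] P₀} {g : P₀ →ₗ[R] U} (hg : Function.Surjective g)
    (he : Function.Exact f g) (k : P₀ →ₗ[R] Z) (hk : k ∘ₗ f = 0) :
    ∃ s : U →ₗ[R] Z, s ∘ₗ g = k := by
  have hk' : LinearMap.ker g ≤ LinearMap.ker k := by
    intro x hx
    obtain ⟨y, rfl⟩ := (he x).1 hx
    exact LinearMap.congr_fun hk y
  refine ⟨(LinearMap.ker g).liftQ k hk' ∘ₗ (g.quotKerEquivOfSurjective hg).symm.toLinearMap, ?_⟩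
  ext x
  have : (g.quotKerEquivOfSurjective hg).symm (g x) = (LinearMap.ker g).mkQ x := by
    rw [LinearEquiv.symm_apply_eq]; rfl
  simp [this]

theorem desc_ker {g : P₀ →ₗ[R] U} (hg : Function.Surjective g)
    (k : P₀ →ₗ[R] Z) (hk : LinearMap.ker g ≤ LinearMap.ker k) :
    ∃ s : U →ₗ[R] Z, s ∘ₗ g = k := by
  refine desc (f := (LinearMap.ker g).subtype) hg ?_ k ?_
  · intro x; simp
  · ext x; exact hk x.2

theorem Pres.comp {f : P₁ →ₗ[R] P₀} {g : P₀ →ₗ[R] U} (h : Pres f g) : g ∘ₗ f = 0 :=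
  h.exact.linearMap_comp_eq_zero

theorem Ev.quot {f : P₁ →ₗ[R] P₀} [Module.Projective R P₁] (h : Ev f Z) (q : Z →ₗ[R] W)
    (hq : Function.Surjective q) : Ev f W := by
  intro t
  obtain ⟨t', rfl⟩ := Module.projective_lifting_property q t hq
  obtain ⟨k, rfl⟩ := h t'
  exact ⟨q ∘ₗ k, rfl⟩

theorem Ev.pi {f : P₁ →ₗ[R] P₀} (h : Ev f Z) (ι : Type) : Ev f (ι → Z) := by
  intro t
  choose k hk using fun i => h (LinearMap.proj i ∘ₗ t)
  refine ⟨LinearMap.pi k, ?_⟩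
  ext x i
  exact LinearMap.congr_fun (hk i) x

theorem Ev.prod {f : P₁ →ₗ[R] P₀} (h : Ev f Z) (h' : Ev f W) : Ev f (Z × W) := by
  intro t
  obtain ⟨k, hk⟩ := h (LinearMap.fst R Z W ∘ₗ t)
  obtain ⟨k', hk'⟩ := h' (LinearMap.snd R Z W ∘ₗ t)
  refine ⟨k.prod k', ?_⟩
  ext x
  · exact LinearMap.congr_fun hk x
  · exact LinearMap.congr_fun hk' x

theorem Ev.gen {f : P₁ →ₗ[R] P₀} [Module.Projective R P₁] (h : Ev f U) (hq : Gen R U Z) :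
    Ev f Z := by
  obtain ⟨n, p, hp⟩ := hq
  exact (h.pi (Fin n)).quot p hp

theorem lift_map {f : P₁ →ₗ[R] P₀} {g : P₀ →ₗ[R] U} (h : Pres f g) (π : E →ₗ[R] Z)
    (hπ : Function.Surjective π) (hE : Ev f (LinearMap.ker π)) (t : U →ₗ[R] Z) :
    ∃ s : U →ₗ[R] E, π ∘ₗ s = t := by
  haveI := h.pr0
  obtain ⟨k0, hk0⟩ := Module.projective_lifting_property π (t ∘ₗ g) hπ
  obtain ⟨k, hk⟩ := hE ((k0 ∘ₗ f).codRestrict (LinearMap.ker π) (by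
    intro x
    have h1 := LinearMap.congr_fun hk0 (f x)
    have h2 := LinearMap.congr_fun h.comp x
    simp at h1 h2
    simp [h1, h2]))
  obtain ⟨s, hs⟩ := desc h.surj h.exact (k0 - (LinearMap.ker π).subtype ∘ₗ k) (by
    ext x
    have := LinearMap.congr_fun hk x
    rw [LinearMap.sub_comp, LinearMap.comp_assoc, hk]
    simp)
  refine ⟨s, ?_⟩
  rw [← LinearMap.cancel_right h.surj, LinearMap.comp_assoc, hs, LinearMap.comp_sub, hk0]
  ext x; simp

theorem Gen.of_fintype {ι : Type} [Fintype ι] (p : (ι → U) →ₗ[R] Z)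
    (hp : Function.Surjective p) : Gen R U Z := by
  refine ⟨Fintype.card ι, p ∘ₗ (LinearEquiv.funCongrLeft R U (Fintype.equivFin ι)).toLinearMap, ?_⟩
  exact hp.comp (LinearEquiv.surjective _)

theorem Gen.refl : Gen R U U :=
  Gen.of_fintype (ι := Unit) (LinearMap.proj ()) (fun x => ⟨fun _ => x, rfl⟩)

theorem Gen.quot (h : Gen R U Z) (q : Z →ₗ[R] W) (hq : Function.Surjective q) : Gen R U W := by
  obtain ⟨n, p, hp⟩ := h
  exact ⟨n, q ∘ₗ p, hq.comp hp⟩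

theorem Gen.pi (h : Gen R U Z) (m : ℕ) : Gen R U (Fin m → Z) := by
  obtain ⟨n, p, hp⟩ := h
  refine Gen.of_fintype (ι := Fin m × Fin n)
    (LinearMap.pi fun i => p ∘ₗ LinearMap.pi fun j => LinearMap.proj (i, j)) ?_
  intro z
  choose y hy using fun i => hp (z i)
  refine ⟨fun ij => y ij.1 ij.2, ?_⟩
  ext i
  exact hy i

theorem Gen.trans (h : Gen R U Z) (h' : Gen R Z W) : Gen R U W := by
  obtain ⟨n, p, hp⟩ := h'
  exact (h.pi n).quot p hp

theorem Gen.prod (h : Gen R U Z) (h' : Gen R U W) : Gen R U (Z × W) := by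
  obtain ⟨n, p, hp⟩ := h
  obtain ⟨n', p', hp'⟩ := h'
  refine Gen.of_fintype (ι := Fin n ⊕ Fin n')
    (LinearMap.prod (p ∘ₗ LinearMap.pi fun j => LinearMap.proj (Sum.inl j))
      (p' ∘ₗ LinearMap.pi fun j => LinearMap.proj (Sum.inr j))) ?_
  rintro ⟨z, w⟩
  obtain ⟨y, rfl⟩ := hp z
  obtain ⟨y', rfl⟩ := hp' w
  exact ⟨Sum.elim y y', rfl⟩

theorem Gen.finite (h : Gen R U Z) [Module.Finite R U] : Module.Finite R Z := by
  obtain ⟨n, p, hp⟩ := h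
  exact Module.Finite.of_surjective p hp

theorem IsAdd.of_fintype {ι : Type} [Fintype ι] (g : Z →ₗ[R] (ι → U)) (p : (ι → U) →ₗ[R] Z)
    (hp : p ∘ₗ g = LinearMap.id) : IsAdd R Z U := by
  refine ⟨Fintype.card ι, (LinearEquiv.funCongrLeft R U (Fintype.equivFin ι)).symm.toLinearMap ∘ₗ g,
    p ∘ₗ (LinearEquiv.funCongrLeft R U (Fintype.equivFin ι)).toLinearMap, ?_⟩
  ext x
  change p ((LinearEquiv.funCongrLeft R U (Fintype.equivFin ι))
    ((LinearEquiv.funCongrLeft R U (Fintype.equivFin ι)).symm (g x))) = x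
  rw [LinearEquiv.apply_symm_apply]
  exact LinearMap.congr_fun hp x

theorem IsAdd.gen (h : IsAdd R Z U) : Gen R U Z := by
  obtain ⟨n, g, p, hp⟩ := h
  exact ⟨n, p, fun x => ⟨g x, LinearMap.congr_fun hp x⟩⟩

theorem IsAdd.refl : IsAdd R U U :=
  IsAdd.of_fintype (ι := Unit) (LinearMap.pi fun _ => LinearMap.id) (LinearMap.proj ()) (by ext; rfl)

theorem IsAdd.retract (h : IsAdd R Z U) (i : W →ₗ[R] Z) (q : Z →ₗ[R] W)
    (hq : q ∘ₗ i = LinearMap.id) : IsAdd R W U := by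
  obtain ⟨n, g, p, hp⟩ := h
  refine ⟨n, g ∘ₗ i, q ∘ₗ p, ?_⟩
  ext x
  have h1 := LinearMap.congr_fun hp (i x)
  have h2 := LinearMap.congr_fun hq x
  simp at h1 h2
  simp [h1, h2]

theorem IsAdd.pi (h : IsAdd R Z U) (m : ℕ) : IsAdd R (Fin m → Z) U := by
  obtain ⟨n, g, p, hp⟩ := h
  refine IsAdd.of_fintype (ι := Fin m × Fin n)
    (LinearMap.pi fun ij => LinearMap.proj ij.2 ∘ₗ g ∘ₗ LinearMap.proj ij.1)
    (LinearMap.pi fun i => p ∘ₗ LinearMap.pi fun j => LinearMap.proj (i, j)) ?_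
  apply LinearMap.ext
  intro x
  ext i
  exact LinearMap.congr_fun hp (x i)

theorem IsAdd.trans (h : IsAdd R Z U) (h' : IsAdd R W Z) : IsAdd R W U := by
  obtain ⟨n, g, p, hp⟩ := h'
  exact (h.pi n).retract g p hp

theorem IsAdd.prod (h : IsAdd R Z U) (h' : IsAdd R W U) : IsAdd R (Z × W) U := by
  obtain ⟨n, g, p, hp⟩ := h
  obtain ⟨n', g', p', hp'⟩ := h'
  refine IsAdd.of_fintype (ι := Fin n ⊕ Fin n')
    (LinearMap.pi fun ij => Sum.casesOn ij (fun i => LinearMap.proj i ∘ₗ g ∘ₗ LinearMap.fst R _ _)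
      (fun i => LinearMap.proj i ∘ₗ g' ∘ₗ LinearMap.snd R _ _))
    (LinearMap.prod (p ∘ₗ LinearMap.pi fun j => LinearMap.proj (Sum.inl j))
      (p' ∘ₗ LinearMap.pi fun j => LinearMap.proj (Sum.inr j))) ?_
  apply LinearMap.ext
  rintro ⟨x, y⟩
  exact Prod.ext (LinearMap.congr_fun hp x) (LinearMap.congr_fun hp' y)

theorem IsAdd.equiv (e : Z ≃ₗ[R] U) : IsAdd R Z U :=
  IsAdd.refl.retract e.toLinearMap e.symm.toLinearMap (by ext; simp)

theorem IsAdd.finite (h : IsAdd R Z U) [Module.Finite R U] : Module.Finite R Z := h.gen.finite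

theorem IsAdd.hom_zero (h : IsAdd R Z U) (h0 : ∀ t : U →ₗ[R] W, t = 0) (t : Z →ₗ[R] W) :
    t = 0 := by
  obtain ⟨n, g, p, hp⟩ := h
  have : t ∘ₗ p = 0 := by
    apply LinearMap.pi_ext'
    intro i
    simpa using h0 _
  rw [← LinearMap.comp_id t, ← hp, ← LinearMap.comp_assoc, this, LinearMap.zero_comp]

theorem Gen.hom_zero (h : Gen R U Z) (h0 : ∀ t : U →ₗ[R] W, t = 0) (t : Z →ₗ[R] W) :
    t = 0 := by
  obtain ⟨n, p, hp⟩ := h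
  have : t ∘ₗ p = 0 := by
    apply LinearMap.pi_ext'
    intro i
    simpa using h0 _
  rw [← LinearMap.cancel_right hp, this, LinearMap.zero_comp]

theorem TauRigid.trace [ArtAlg R] [Module.Finite R U] [Module.Finite R Z] (hU : TauRigid R U) :
    ∃ A : Submodule R Z, Gen R U A ∧ ∀ t : U →ₗ[R] (Z ⧸ A), t = 0 := by
  obtain ⟨P₁, P₀, f, g, h, hf⟩ := hU
  obtain ⟨n, p, hp⟩ := right_approx (R := R) U Z
  have hG : Gen R U (LinearMap.range p) := ⟨n, p.rangeRestrict, p.surjective_rangeRestrict⟩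
  refine ⟨LinearMap.range p, hG, fun t => ?_⟩
  haveI := h.pr1
  obtain ⟨s, hs⟩ := lift_map h (LinearMap.range p).mkQ (Submodule.mkQ_surjective _)
    (by rw [Submodule.ker_mkQ]; exact hf.gen hG) t
  obtain ⟨c, rfl⟩ := hp s
  rw [← hs]
  ext x
  simp

/-- The torsion class generated by `B`. -/
def TB (R : Type) [Ring R] (B X : Type) [AddCommGroup B] [Module R B] [AddCommGroup X]
    [Module R X] : Prop :=
  ∀ (N : Type) [AddCommGroup N] [Module R N], (∀ t : B →ₗ[R] N, t = 0) → ∀ t : X →ₗ[R] N, t = 0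

theorem TauRigid.gen_of_TB [ArtAlg R] [Module.Finite R U] [Module.Finite R Z] (hU : TauRigid R U)
    (h : Gen R U W) (hZ : TB R W Z) : Gen R U Z := by
  obtain ⟨A, hA, h0⟩ := hU.trace (Z := Z)
  have h1 := hZ (Z ⧸ A) (fun t => h.hom_zero h0 t) A.mkQ
  have h2 : A = ⊤ := by rw [← Submodule.ker_mkQ A, h1, LinearMap.ker_zero]
  exact hA.quot A.subtype (by intro x; exact ⟨⟨x, by rw [h2]; trivial⟩, rfl⟩)

theorem TB.gen (h : TB R W Z) (h' : Gen R Z E) : TB R W E :=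
  fun N _ _ hN => h'.hom_zero (h N hN)

theorem TB.refl : TB R W W := fun _ _ _ h => h

theorem TB.ext (h : TB R W Z) (i : Z →ₗ[R] E) (p : E →ₗ[R] U) (hp : Function.Surjective p)
    (he : Function.Exact i p) (h' : TB R W U) : TB R W E := by
  intro N _ _ hN t
  obtain ⟨s, hs⟩ := desc hp he t (h N hN _)
  rw [← hs, h' N hN s, LinearMap.zero_comp]

end basic


section fitting
variable [ArtAlg R]
variable {P₁ P₀ M Q₁ Q₀ N Z : Type} [AddCommGroup P₁] [Module R P₁] [AddCommGroup P₀] [Module R P₀]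
  [AddCommGroup M] [Module R M] [AddCommGroup Q₁] [Module R Q₁] [AddCommGroup Q₀] [Module R Q₀]
  [AddCommGroup N] [Module R N] [AddCommGroup Z] [Module R Z]

theorem lift_through {P X Y W : Type} [AddCommGroup P] [Module R P] [AddCommGroup X] [Module R X]
    [AddCommGroup Y] [Module R Y] [AddCommGroup W] [Module R W] [Module.Projective R P]
    (f : X →ₗ[R] Y) (g : Y →ₗ[R] W) (he : Function.Exact f g) (t : P →ₗ[R] Y)
    (h : ∀ x, g (t x) = 0) : ∃ s : P →ₗ[R] X, ∀ x, f (s x) = t x := by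
  obtain ⟨s, hs⟩ := Module.projective_lifting_property f.rangeRestrict
    (t.codRestrict (LinearMap.range f) (fun x => (he _).1 (h x))) f.surjective_rangeRestrict
  exact ⟨s, fun x => congrArg Subtype.val (LinearMap.congr_fun hs x)⟩

theorem lift_complex {f : P₁ →ₗ[R] P₀} {g : P₀ →ₗ[R] M} (h : Pres f g)
    {f' : Q₁ →ₗ[R] Q₀} {g' : Q₀ →ₗ[R] N} (h' : Pres f' g') (t : M →ₗ[R] N) :
    ∃ (u₁ : P₁ →ₗ[R] Q₁) (u₀ : P₀ →ₗ[R] Q₀), (∀ x, g' (u₀ x) = t (g x)) ∧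
      (∀ x, u₀ (f x) = f' (u₁ x)) := by
  haveI := h.pr0
  haveI := h.pr1
  obtain ⟨u₀, hu₀⟩ := Module.projective_lifting_property g' (t ∘ₗ g) h'.surj
  have hu : ∀ x, g' (u₀ x) = t (g x) := LinearMap.congr_fun hu₀
  obtain ⟨u₁, hu₁⟩ := lift_through f' g' h'.exact (u₀ ∘ₗ f) (by
    intro x
    have := LinearMap.congr_fun h.comp x
    simp at this
    simp [hu, this])
  exact ⟨u₁, u₀, hu, fun x => (hu₁ x).symm⟩

theorem exists_pres (M : Type) [AddCommGroup M] [Module R M] [Module.Finite R M] :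
    ∃ (P₁ P₀ : ModuleCat.{0} R) (f : P₁ →ₗ[R] P₀) (g : P₀ →ₗ[R] M), Pres f g := by
  obtain ⟨n, g, hg⟩ := Module.Finite.exists_fin' R M
  obtain ⟨m, f, hf⟩ := Module.Finite.exists_fin' R (LinearMap.ker g)
  refine ⟨ModuleCat.of R (Fin m → R), ModuleCat.of R (Fin n → R), (LinearMap.ker g).subtype ∘ₗ f, g,
    ⟨?_, ?_, ?_, ?_, hg, ?_⟩⟩
  · exact inferInstanceAs (Module.Finite R (Fin m → R))
  · exact inferInstanceAs (Module.Finite R (Fin n → R))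
  · exact inferInstanceAs (Module.Projective R (Fin m → R))
  · exact inferInstanceAs (Module.Projective R (Fin n → R))
  · intro x
    constructor
    · intro hx
      obtain ⟨y, hy⟩ := hf ⟨x, hx⟩
      exact ⟨y, by simp [hy]⟩
    · rintro ⟨y, rfl⟩
      exact (f y).2

/-- minimal presentations -/
def MinPres (f : P₁ →ₗ[R] P₀) (g : P₀ →ₗ[R] M) : Prop :=
  Pres f g ∧ ∀ (Q₁ Q₀ : Type) [AddCommGroup Q₁] [Module R Q₁] [AddCommGroup Q₀] [Module R Q₀]
    (f' : Q₁ →ₗ[R] Q₀) (g' : Q₀ →ₗ[R] M), Pres f' g' → len R P₁ + len R P₀ ≤ len R Q₁ + len R Q₀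

theorem exists_minPres (M : Type) [AddCommGroup M] [Module R M] [Module.Finite R M] :
    ∃ (P₁ P₀ : ModuleCat.{0} R) (f : P₁ →ₗ[R] P₀) (g : P₀ →ₗ[R] M), MinPres f g := by
  classical
  have hex : ∃ (n : ℕ) (P₁ P₀ : ModuleCat.{0} R) (f : P₁ →ₗ[R] P₀) (g : P₀ →ₗ[R] M), Pres f g ∧
      len R P₁ + len R P₀ = n := by
    obtain ⟨P₁, P₀, f, g, h⟩ := exists_pres (R := R) M
    exact ⟨_, P₁, P₀, f, g, h, rfl⟩
  obtain ⟨P₁, P₀, f, g, h, hn⟩ := Nat.find_spec hex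
  refine ⟨P₁, P₀, f, g, h, ?_⟩
  intro Q₁ Q₀ _ _ _ _ f' g' h'
  rw [hn]
  exact Nat.find_min' hex ⟨ModuleCat.of R Q₁, ModuleCat.of R Q₀, f', g', h', rfl⟩

theorem proj_range_pow (e : Module.End R M) [Module.Projective R M] (n : ℕ)
    (h : IsCompl (LinearMap.ker (e ^ n)) (LinearMap.range (e ^ n))) :
    Module.Projective R (LinearMap.range (e ^ n)) :=
  Module.Projective.of_split (LinearMap.range (e ^ n)).subtype
    (Submodule.projectionOnto _ _ h.symm) (by ext x; simp)

theorem proj_range_idem (e : M →ₗ[R] M) [Module.Projective R M] (h : ∀ x, e (e x) = e x) :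
    Module.Projective R (LinearMap.range e) :=
  Module.Projective.of_split (LinearMap.range e).subtype e.rangeRestrict (by
    ext x; obtain ⟨_, ⟨y, rfl⟩⟩ := x; exact h y)

theorem bij_of_range_pow [Module.Finite R M] (e : Module.End R M) (n : ℕ) (hn : n ≠ 0)
    (h : len R M ≤ len R (LinearMap.range (e ^ n))) : Function.Bijective e := by
  have hi := inj_of_len (e ^ n) h
  have hi' : Function.Injective e := by
    intro x y hxy
    apply hi
    obtain ⟨m, rfl⟩ := Nat.exists_eq_succ_of_ne_zero hn
    simp [pow_succ, hxy]
  exact ⟨hi', surj_of_len e hi' le_rfl⟩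

theorem MinPres.bij {f : P₁ →ₗ[R] P₀} {g : P₀ →ₗ[R] M} (h : MinPres f g)
    (a₁ : Module.End R P₁) (a₀ : Module.End R P₀) (h1 : ∀ x, g (a₀ x) = g x)
    (h2 : ∀ x, a₀ (f x) = f (a₁ x)) : Function.Bijective a₁ ∧ Function.Bijective a₀ := by
  haveI := h.1.fin0
  haveI := h.1.fin1
  haveI := h.1.pr0
  haveI := h.1.pr1
  obtain ⟨n, ⟨hn1, hn0⟩, hn⟩ := ((a₁.eventually_isCompl_ker_pow_range_pow.and
    a₀.eventually_isCompl_ker_pow_range_pow).and (Filter.eventually_ge_atTop 1)).exists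
  have h1' : ∀ n x, g ((a₀ ^ n) x) = g x := by
    intro n
    induction n with
    | zero => simp
    | succ n ih => intro x; rw [pow_succ]; simp [ih, h1]
  have h2' : ∀ n x, (a₀ ^ n) (f x) = f ((a₁ ^ n) x) := by
    intro n
    induction n with
    | zero => simp
    | succ n ih => intro x; rw [pow_succ, pow_succ]; simp [ih, h2]
  have hp : Pres (f.restrict (p := LinearMap.range (a₁ ^ n)) (q := LinearMap.range (a₀ ^ n)) (by
      rintro _ ⟨y, rfl⟩
      exact ⟨f y, h2' n y⟩)) (g ∘ₗ (LinearMap.range (a₀ ^ n)).subtype) := by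
    refine ⟨inferInstance, inferInstance, proj_range_pow _ _ hn1, proj_range_pow _ _ hn0, ?_, ?_⟩
    · intro m
      obtain ⟨x, rfl⟩ := h.1.surj m
      exact ⟨⟨(a₀ ^ n) x, x, rfl⟩, h1' n x⟩
    · rintro ⟨_, y, rfl⟩
      constructor
      · intro hy
        have hy' : g y = 0 := by rw [← h1' n y]; exact hy
        obtain ⟨z, rfl⟩ := (h.1.exact y).1 hy'
        refine ⟨⟨(a₁ ^ n) z, z, rfl⟩, ?_⟩
        ext
        exact (h2' n z).symm
      · rintro ⟨⟨_, z, rfl⟩, hz⟩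
        have : f ((a₁ ^ n) z) = (a₀ ^ n) y := congrArg Subtype.val hz
        change g ((a₀ ^ n) y) = 0
        rw [← this]
        exact LinearMap.congr_fun h.1.comp _
  have h3 := h.2 _ _ _ _ hp
  have h4 := len_ker_range (a₁ ^ n)
  have h5 := len_ker_range (a₀ ^ n)
  exact ⟨bij_of_range_pow _ n (by omega) (by omega), bij_of_range_pow _ n (by omega) (by omega)⟩

/-- a minimal presentation of a retract is a retract of any presentation -/
theorem MinPres.retract {f : P₁ →ₗ[R] P₀} {g : P₀ →ₗ[R] M} (h : MinPres f g)
    {f' : Q₁ →ₗ[R] Q₀} {g' : Q₀ →ₗ[R] N} (h' : Pres f' g') (i : M →ₗ[R] N) (r : N →ₗ[R] M)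
    (hr : ∀ x, r (i x) = x) :
    ∃ (u₁ : P₁ →ₗ[R] Q₁) (u₀ : P₀ →ₗ[R] Q₀) (v₁ : Q₁ →ₗ[R] P₁) (v₀ : Q₀ →ₗ[R] P₀),
      (∀ x, u₀ (f x) = f' (u₁ x)) ∧ (∀ x, v₀ (f' x) = f (v₁ x)) ∧
      (∀ x, v₁ (u₁ x) = x) ∧ (∀ x, v₀ (u₀ x) = x) ∧ (∀ x, g' (u₀ x) = i (g x)) ∧
      (∀ x, g (v₀ x) = r (g' x)) := by
  obtain ⟨u₁, u₀, hu, hu'⟩ := lift_complex h.1 h' i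
  obtain ⟨v₁, v₀, hv, hv'⟩ := lift_complex h' h.1 r
  obtain ⟨b1, b0⟩ := h.bij (v₁ ∘ₗ u₁) (v₀ ∘ₗ u₀) (by intro x; simp [hv, hu, hr])
    (by intro x; simp [hu', hv'])
  let e1 := LinearEquiv.ofBijective _ b1
  let e0 := LinearEquiv.ofBijective _ b0
  refine ⟨u₁, u₀, e1.symm.toLinearMap ∘ₗ v₁, e0.symm.toLinearMap ∘ₗ v₀, hu', ?_, ?_, ?_, hu, ?_⟩
  · intro x
    change e0.symm (v₀ (f' x)) = f (e1.symm (v₁ x))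
    rw [LinearEquiv.symm_apply_eq, hv']
    change _ = v₀ (u₀ (f (e1.symm (v₁ x))))
    rw [hu', hv']
    change _ = f (e1 (e1.symm (v₁ x)))
    simp
  · intro x
    change e1.symm (e1 x) = x
    simp
  · intro x
    change e0.symm (e0 x) = x
    simp
  · intro x
    have h6 : ∀ y, g (e0 y) = g y := fun y => by
      change g (v₀ (u₀ y)) = g y
      rw [hv, hu, hr]
    rw [← hv, ← h6]
    change g (e0 (e0.symm (v₀ x))) = _
    simp

theorem MinPres.ev {f : P₁ →ₗ[R] P₀} {g : P₀ →ₗ[R] M} (h : MinPres f g)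
    {f' : Q₁ →ₗ[R] Q₀} {g' : Q₀ →ₗ[R] N} (h' : Pres f' g') (i : M →ₗ[R] N) (r : N →ₗ[R] M)
    (hr : ∀ x, r (i x) = x) (hZ : Ev f' Z) : Ev f Z := by
  obtain ⟨u₁, u₀, v₁, v₀, h1, h2, h3, h4, -⟩ := h.retract h' i r hr
  intro t
  obtain ⟨k, hk⟩ := hZ (t ∘ₗ v₁)
  refine ⟨k ∘ₗ u₀, ?_⟩
  ext x
  have := LinearMap.congr_fun hk (u₁ x)
  simp [h3] at this
  simp [h1, this]

theorem proj_pi [Module.Projective R M] (k : ℕ) : Module.Projective R (Fin k → M) :=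
  Module.Projective.of_equiv (DFinsupp.linearEquivFunOnFintype (R := R) (ι := Fin k) (M := fun _ => M))

theorem Pres.pi {f : P₁ →ₗ[R] P₀} {g : P₀ →ₗ[R] M} (h : Pres f g) (k : ℕ) :
    Pres (f.compLeft (Fin k)) (g.compLeft (Fin k)) := by
  haveI := h.fin0
  haveI := h.fin1
  haveI := h.pr0
  haveI := h.pr1
  refine ⟨inferInstance, inferInstance, proj_pi k, proj_pi k, ?_, ?_⟩
  · intro y
    choose x hx using fun i => h.surj (y i)
    exact ⟨x, funext hx⟩
  · intro y
    constructor
    · intro hy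
      choose x hx using fun i => (h.exact (y i)).1 (congrFun hy i)
      exact ⟨x, funext hx⟩
    · rintro ⟨x, rfl⟩
      ext i
      exact LinearMap.congr_fun h.comp (x i)

theorem Ev.compLeft {f : P₁ →ₗ[R] P₀} (h : Ev f Z) (k : ℕ) : Ev (f.compLeft (Fin k)) Z := by
  classical
  intro t
  choose s hs using fun i => h (t ∘ₗ LinearMap.single R (fun _ : Fin k => P₁) i)
  refine ⟨∑ i, s i ∘ₗ LinearMap.proj i, ?_⟩
  apply LinearMap.ext
  intro x
  have h1 : ∀ i, s i (f (x i)) = t (Pi.single i (x i)) := fun i => LinearMap.congr_fun (hs i) (x i)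
  simp only [LinearMap.comp_apply, LinearMap.sum_apply, LinearMap.proj_apply,
    LinearMap.compLeft_apply, Function.comp, h1]
  rw [← map_sum, Finset.univ_sum_single]

theorem Pres.prod {f : P₁ →ₗ[R] P₀} {g : P₀ →ₗ[R] M} (h : Pres f g) {f' : Q₁ →ₗ[R] Q₀}
    {g' : Q₀ →ₗ[R] N} (h' : Pres f' g') : Pres (f.prodMap f') (g.prodMap g') := by
  haveI := h.fin0
  haveI := h.fin1
  haveI := h.pr0
  haveI := h.pr1
  haveI := h'.fin0
  haveI := h'.fin1
  haveI := h'.pr0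
  haveI := h'.pr1
  refine ⟨inferInstance, inferInstance, inferInstance, inferInstance, ?_, ?_⟩
  · exact Function.Surjective.prodMap h.surj h'.surj
  · rintro ⟨x, y⟩
    constructor
    · intro hy
      obtain ⟨a, ha⟩ := (h.exact x).1 (congrArg Prod.fst hy)
      obtain ⟨b, hb⟩ := (h'.exact y).1 (congrArg Prod.snd hy)
      exact ⟨(a, b), Prod.ext ha hb⟩
    · rintro ⟨⟨a, b⟩, hab⟩
      rw [← hab]
      exact Prod.ext (LinearMap.congr_fun h.comp a) (LinearMap.congr_fun h'.comp b)

theorem Ev.prodMap {f : P₁ →ₗ[R] P₀} {f' : Q₁ →ₗ[R] Q₀} (h : Ev f Z) (h' : Ev f' Z) :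
    Ev (f.prodMap f') Z := by
  intro t
  obtain ⟨k, hk⟩ := h (t ∘ₗ LinearMap.inl R _ _)
  obtain ⟨k', hk'⟩ := h' (t ∘ₗ LinearMap.inr R _ _)
  refine ⟨k.coprod k', ?_⟩
  apply LinearMap.prod_ext
  · rw [← hk]; ext; simp
  · rw [← hk']; ext; simp

theorem Ev.fst {f : P₁ →ₗ[R] P₀} {f' : Q₁ →ₗ[R] Q₀} (h : Ev (f.prodMap f') Z) : Ev f Z := by
  intro t
  obtain ⟨k, hk⟩ := h (t ∘ₗ LinearMap.fst R _ _)
  refine ⟨k ∘ₗ LinearMap.inl R _ _, ?_⟩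
  ext x
  simpa using LinearMap.congr_fun hk (x, 0)

theorem Ev.snd {f : P₁ →ₗ[R] P₀} {f' : Q₁ →ₗ[R] Q₀} (h : Ev (f.prodMap f') Z) : Ev f' Z := by
  intro t
  obtain ⟨k, hk⟩ := h (t ∘ₗ LinearMap.snd R _ _)
  refine ⟨k ∘ₗ LinearMap.inr R _ _, ?_⟩
  ext x
  simpa using LinearMap.congr_fun hk (0, x)

theorem TauRigid.isAdd [Module.Finite R M] (h : TauRigid R M) (hN : IsAdd R N M) :
    TauRigid R N := by
  obtain ⟨P₁, P₀, f, g, hp, hf⟩ := h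
  obtain ⟨k, i, r, hr⟩ := id hN
  haveI := hN.finite
  obtain ⟨Q₁, Q₀, f', g', hm⟩ := exists_minPres (R := R) N
  refine ⟨Q₁, Q₀, f', g', hm.1, ?_⟩
  haveI := hm.1.pr1
  haveI := hp.pr1
  haveI := proj_pi (R := R) (M := P₁) k
  exact hm.ev (hp.pi k) i r (LinearMap.congr_fun hr) ((hf.compLeft k).gen hN.gen)

/-- comparison of presentations -/
theorem ev_compare [Module.Finite R M] {f : P₁ →ₗ[R] P₀} {g : P₀ →ₗ[R] M} (h : Pres f g)
    (hf : Ev f M)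
    {f' : Q₁ →ₗ[R] Q₀} {g' : Q₀ →ₗ[R] N} (h' : Pres f' g') (i : M →ₗ[R] N) (r : N →ₗ[R] M)
    (hr : ∀ x, r (i x) = x) (hZ : Ev f' Z)
    (hP : ∀ (P : Type) [AddCommGroup P] [Module R P] [Module.Finite R P] [Module.Projective R P],
      (∀ t : P →ₗ[R] M, t = 0) → ∀ t : P →ₗ[R] Z, t = 0) : Ev f Z := by
  obtain ⟨A₁, A₀, a, b, hm⟩ := exists_minPres (R := R) M
  have hmZ : Ev a Z := hm.ev h' i r hr hZ
  obtain ⟨u₁, u₀, v₁, v₀, h1, h2, h3, h4, h5, h6⟩ := hm.retract h LinearMap.id LinearMap.id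
    (fun _ => rfl)
  haveI := h.pr0
  haveI := h.pr1
  haveI := h.fin1
  obtain ⟨s, hs⟩ := lift_through f g h.exact (LinearMap.id - u₀ ∘ₗ v₀) (by
    intro x
    simp [h5, h6])
  let c₁ : P₁ →ₗ[R] P₁ := LinearMap.id - u₁ ∘ₗ v₁
  let c₀ : P₀ →ₗ[R] P₀ := LinearMap.id - u₀ ∘ₗ v₀
  have hcc1 : ∀ x, c₁ (c₁ x) = c₁ x := by intro x; simp [c₁, h3]
  have hcc0 : ∀ x, c₀ (c₀ x) = c₀ x := by intro x; simp [c₀, h4]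
  have hfc : ∀ x, f (c₁ x) = c₀ (f x) := by intro x; simp [c₀, c₁, h2, h1]
  have hs' : ∀ x, f (s x) = c₀ x := hs
  let t : P₀ →ₗ[R] P₁ := c₁ ∘ₗ s ∘ₗ c₀
  have hft : ∀ x, f (t x) = c₀ x := by intro x; simp [t, hfc, hs', hcc0]
  have htc : ∀ x, t (c₀ x) = t x := by intro x; simp [t, hcc0]
  have hct : ∀ x, c₁ (t x) = t x := by intro x; simp [t, hcc1]
  let D : P₁ →ₗ[R] P₁ := c₁ - t ∘ₗ f
  have hfD : ∀ x, f (D x) = 0 := by intro x; simp [D, hft, hfc]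
  have hcD : ∀ x, c₁ (D x) = D x := by intro x; simp [D, hcc1, hct]
  have hDD : ∀ x, D (D x) = D x := by
    intro x
    have : D (D x) = c₁ (D x) - t (f (D x)) := rfl
    rw [this, hfD, hcD]; simp
  haveI := proj_range_idem D hDD
  have hZ0 := hP (LinearMap.range D) (by
    intro q
    obtain ⟨k, hk⟩ := hf (q ∘ₗ D.rangeRestrict)
    ext ⟨_, y, rfl⟩
    have := LinearMap.congr_fun hk (D y)
    simp only [LinearMap.comp_apply, hfD, map_zero] at this
    rw [LinearMap.zero_apply, this]
    congr 1
    ext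
    exact (hDD y).symm)
  intro q
  obtain ⟨k, hk⟩ := hmZ (q ∘ₗ u₁)
  have hk' : ∀ x, k (a x) = q (u₁ x) := LinearMap.congr_fun hk
  refine ⟨k ∘ₗ v₀ + q ∘ₗ t, ?_⟩
  ext x
  have hqD : q (D x) = 0 :=
    LinearMap.congr_fun (hZ0 (q ∘ₗ (LinearMap.range D).subtype)) ⟨D x, x, rfl⟩
  have hx : x = u₁ (v₁ x) + t (f x) + D x := by simp [D, c₁]
  conv_rhs => rw [hx]
  simp [hqD, h2, hk']

end fitting


section cob
variable [ArtAlg R]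

theorem cobongartz (U : Type) [AddCommGroup U] [Module R U] [Module.Finite R U]
    (hU : TauRigid R U) :
    ∃ (M P₁ P₀ : ModuleCat.{0} R) (f : P₁ →ₗ[R] P₀) (g : P₀ →ₗ[R] M), Module.Finite R M ∧
      Pres f g ∧ IsAdd R U M ∧ Gen R U M ∧
      ∀ (Z : Type) [AddCommGroup Z] [Module R Z] [Module.Finite R Z], Ev f Z ↔ Gen R U Z := by
  have hU' := hU
  obtain ⟨P₁, P₀, f, g, h, hf⟩ := hU'
  obtain ⟨n, q, hq⟩ := left_approx (R := R) U R
  haveI := h.pr0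
  haveI := h.pr1
  haveI := h.fin0
  haveI := h.fin1
  have hn := h.pi n
  obtain ⟨q', hq'⟩ := Module.projective_lifting_property (g.compLeft (Fin n)) q hn.surj
  have hq2 : ∀ r, g.compLeft (Fin n) (q' r) = q r := LinearMap.congr_fun hq'
  have hgf : ∀ z, g.compLeft (Fin n) (f.compLeft (Fin n) z) = 0 := LinearMap.congr_fun hn.comp
  let fC : (Fin n → P₁) × R →ₗ[R] (Fin n → P₀) := (f.compLeft (Fin n)).coprod q'
  let gC : (Fin n → P₀) →ₗ[R] ((Fin n → U) ⧸ LinearMap.range q) :=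
    (LinearMap.range q).mkQ ∘ₗ g.compLeft (Fin n)
  haveI := hn.pr1
  haveI := hn.fin1
  have hC : Pres fC gC := by
    refine ⟨inferInstance, hn.fin0, inferInstance, hn.pr0,
      (Submodule.mkQ_surjective _).comp hn.surj, ?_⟩
    intro y
    constructor
    · intro hy
      have hy' : g.compLeft (Fin n) y ∈ LinearMap.range q := by
        rw [← Submodule.ker_mkQ (LinearMap.range q)]; exact hy
      obtain ⟨r, hr⟩ := hy'
      obtain ⟨z, hz⟩ := (hn.exact (y - q' r)).1 (by rw [map_sub, hq2, hr, sub_self])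
      refine ⟨(z, r), ?_⟩
      simp only [fC, LinearMap.coprod_apply]
      rw [hz]; simp
    · rintro ⟨⟨z, r⟩, rfl⟩
      change (LinearMap.range q).mkQ (g.compLeft (Fin n) (fC (z, r))) = 0
      simp only [fC, LinearMap.coprod_apply]
      rw [map_add, hgf, hq2]
      simp
  have hCU : Ev fC U := by
    intro t
    obtain ⟨k, hk⟩ := hf.compLeft n (t ∘ₗ LinearMap.inl R _ _)
    obtain ⟨c, hc⟩ := hq (t ∘ₗ LinearMap.inr R _ _ - k ∘ₗ q')
    refine ⟨k + c ∘ₗ g.compLeft (Fin n), ?_⟩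
    apply LinearMap.prod_ext
    · rw [← hk]
      apply LinearMap.ext
      intro x
      have := hgf x
      simp only [fC, LinearMap.comp_apply, LinearMap.coprod_apply, LinearMap.add_apply,
        LinearMap.inl_apply, map_zero, add_zero] at this ⊢
      rw [this]; simp
    · apply LinearMap.ext
      intro x
      have h1 := LinearMap.congr_fun hc x
      have h2 := hq2 x
      simp only [fC, LinearMap.comp_apply, LinearMap.coprod_apply, LinearMap.add_apply,
        LinearMap.inr_apply, map_zero, zero_add, LinearMap.sub_apply] at h1 h2 ⊢
      rw [h2, h1]; simp
  have hCG : Gen R U ((Fin n → U) ⧸ LinearMap.range q) :=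
    ⟨n, (LinearMap.range q).mkQ, Submodule.mkQ_surjective _⟩
  refine ⟨ModuleCat.of R (U × ((Fin n → U) ⧸ LinearMap.range q)),
    ModuleCat.of R (P₁ × ((Fin n → P₁) × R)), ModuleCat.of R (P₀ × (Fin n → P₀)),
    f.prodMap fC, g.prodMap gC,
    inferInstanceAs (Module.Finite R (U × ((Fin n → U) ⧸ LinearMap.range q))),
    h.prod hC, ?_, Gen.refl.prod hCG, ?_⟩
  · exact (IsAdd.refl (R := R) (U := U × ((Fin n → U) ⧸ LinearMap.range q))).retract
      (LinearMap.inl R _ _) (LinearMap.fst R _ _) (by ext; simp)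
  · intro Z _ _ _
    constructor
    · intro hZ
      have hZC : Ev fC Z := hZ.snd
      obtain ⟨A, hA, hA0⟩ := hU.trace (Z := Z)
      have hZA : Ev fC (Z ⧸ A) := hZC.quot A.mkQ A.mkQ_surjective
      have hz : ∀ z : Z ⧸ A, z = 0 := by
        intro z
        obtain ⟨k, hk⟩ := hZA (LinearMap.toSpanSingleton R _ z ∘ₗ LinearMap.snd R _ _)
        obtain ⟨s, hs⟩ := desc hn.surj hn.exact k (by
          apply LinearMap.ext
          intro x
          have := LinearMap.congr_fun hk (x, 0)
          simpa [fC] using this)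
        have hs0 : s = 0 := Gen.hom_zero (R := R) (U := U) ⟨n, LinearMap.id, fun x => ⟨x, rfl⟩⟩ hA0 s
        rw [hs0, LinearMap.zero_comp] at hs
        have := LinearMap.congr_fun hk (0, 1)
        rw [← hs] at this
        simpa using this.symm
      have hAT : A = ⊤ := by
        rw [← Submodule.Quotient.subsingleton_iff]
        exact ⟨fun a b => by rw [hz a, hz b]⟩
      exact hA.quot A.subtype (by intro x; exact ⟨⟨x, by rw [hAT]; trivial⟩, rfl⟩)
    · intro hZ
      exact (hf.prodMap hCU).gen hZ

theorem exists_maxP (M : Type) [AddCommGroup M] [Module R M] :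
    ∃ P : ModuleCat.{0} R, Module.Finite R P ∧ Module.Projective R P ∧
      (∀ t : P →ₗ[R] M, t = 0) ∧
      ∀ (Q : Type) [AddCommGroup Q] [Module R Q] [Module.Finite R Q] [Module.Projective R Q],
        (∀ t : Q →ₗ[R] M, t = 0) → IsAdd R Q P := by
  let tr : (P : ModuleCat.{0} R) → Submodule R R := fun P => ⨆ t : P →ₗ[R] R, LinearMap.range t
  let good : ModuleCat.{0} R → Prop := fun P => Module.Finite R P ∧ Module.Projective R P ∧
      (∀ t : P →ₗ[R] M, t = 0)
  have hne : (tr '' {P | good P}).Nonempty := by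
    refine ⟨_, ModuleCat.of R PUnit, ⟨?_, ?_, ?_⟩, rfl⟩
    · exact inferInstanceAs (Module.Finite R PUnit)
    · exact inferInstanceAs (Module.Projective R PUnit)
    · intro t
      apply LinearMap.ext
      intro x
      rw [show x = 0 from rfl, map_zero, map_zero]
  obtain ⟨_, ⟨P, hP, rfl⟩, hmax⟩ := set_has_maximal_iff_noetherian.2
    (inferInstance : IsNoetherian R R) _ hne
  refine ⟨P, hP.1, hP.2.1, hP.2.2, ?_⟩
  intro Q _ _ _ _ hQ
  haveI := hP.1
  haveI := hP.2.1
  have hle : ∀ t : Q →ₗ[R] R, LinearMap.range t ≤ tr P := by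
    intro t
    have hgood : good (ModuleCat.of R (P × Q)) := by
      refine ⟨inferInstanceAs (Module.Finite R (P × Q)),
        inferInstanceAs (Module.Projective R (P × Q)), ?_⟩
      intro (s : (P × Q) →ₗ[R] M)
      apply LinearMap.prod_ext
      · rw [hP.2.2 (s ∘ₗ LinearMap.inl R _ _)]; rfl
      · rw [hQ (s ∘ₗ LinearMap.inr R _ _)]; rfl
    have h1 : tr P ≤ tr (ModuleCat.of R (P × Q)) := by
      refine iSup_le fun s => ?_
      refine le_trans ?_ (le_iSup _ (s ∘ₗ LinearMap.fst R P Q))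
      rintro _ ⟨x, rfl⟩
      exact ⟨(x, 0), rfl⟩
    have h2 : tr P = tr (ModuleCat.of R (P × Q)) := by
      by_contra h3
      exact hmax _ ⟨_, hgood, rfl⟩ (lt_of_le_of_ne h1 h3)
    rw [h2]
    refine le_trans ?_ (le_iSup _ (t ∘ₗ LinearMap.snd R P Q))
    rintro _ ⟨x, rfl⟩
    exact ⟨(0, x), rfl⟩
  obtain ⟨n, π, hπ⟩ := right_approx (R := R) P Q
  have hs : Function.Surjective π := by
    obtain ⟨m, p, hp⟩ := Module.Finite.exists_fin' R Q
    obtain ⟨i, hi⟩ := Module.projective_lifting_property p LinearMap.id hp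
    intro x
    have hx : x = p (i x) := (LinearMap.congr_fun hi x).symm
    rw [← LinearMap.mem_range, hx, LinearMap.pi_apply_eq_sum_univ]
    refine Submodule.sum_mem _ fun j _ => ?_
    have h1 : tr P ≤ (LinearMap.range π).comap (LinearMap.toSpanSingleton R Q
        (p fun k => if j = k then 1 else 0)) := by
      refine iSup_le fun s => ?_
      rintro _ ⟨y, rfl⟩
      obtain ⟨c, hc⟩ := hπ (LinearMap.toSpanSingleton R Q
        (p fun k => if j = k then 1 else 0) ∘ₗ s)
      exact ⟨c y, LinearMap.congr_fun hc y⟩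
    exact h1 (hle (LinearMap.proj j ∘ₗ i) ⟨x, rfl⟩)
  obtain ⟨s, hs'⟩ := Module.projective_lifting_property π LinearMap.id hs
  exact ⟨n, s, π, hs'⟩

theorem Ev.kernel {P₁ P₀ M X N : Type} [AddCommGroup P₁] [Module R P₁] [AddCommGroup P₀]
    [Module R P₀] [AddCommGroup M] [Module R M] [AddCommGroup X] [Module R X]
    [AddCommGroup N] [Module R N] {f : P₁ →ₗ[R] P₀} {g : P₀ →ₗ[R] M} (h : Pres f g)
    (hX : Ev f X) (p : X →ₗ[R] N) (hp : ∀ t : M →ₗ[R] N, ∃ c : M →ₗ[R] X, p ∘ₗ c = t) :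
    Ev f (LinearMap.ker p) := by
  intro t
  obtain ⟨k, hk⟩ := hX ((LinearMap.ker p).subtype ∘ₗ t)
  obtain ⟨s, hs⟩ := desc h.surj h.exact (p ∘ₗ k) (by
    rw [LinearMap.comp_assoc, hk]; ext x; simp)
  obtain ⟨c, rfl⟩ := hp s
  refine ⟨(k - c ∘ₗ g).codRestrict (LinearMap.ker p) (fun x => ?_), ?_⟩
  · have := LinearMap.congr_fun hs x
    simp at this
    simp [this]
  · ext x
    have h1 := LinearMap.congr_fun hk x
    have h2 := LinearMap.congr_fun h.comp x
    simp at h1 h2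
    simp [h1, h2]

theorem max_lemma {U M P P₁ P₀ W : Type} [AddCommGroup U] [Module R U]
    [AddCommGroup P₁] [Module R P₁] [AddCommGroup P₀]
    [Module R P₀] [AddCommGroup M] [Module R M] [AddCommGroup P] [Module R P]
    [AddCommGroup W] [Module R W] {f : P₁ →ₗ[R] P₀} {g : P₀ →ₗ[R] M} (h : Pres f g)
    [Module.Finite R U] [Module.Finite R M] [Module.Finite R W]
    (hUM : IsAdd R U M) (hMU : Gen R U M)
    (hEv : ∀ (Z : Type) [AddCommGroup Z] [Module R Z] [Module.Finite R Z], Ev f Z ↔ Gen R U Z)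
    (hP : ∀ (Q : Type) [AddCommGroup Q] [Module R Q] [Module.Finite R Q] [Module.Projective R Q],
        (∀ t : Q →ₗ[R] M, t = 0) → IsAdd R Q P)
    (hW : TauRigid R W) (hMW : IsAdd R M W) (hPW : ∀ t : P →ₗ[R] W, t = 0) :
    IsAdd R W M := by
  obtain ⟨Q₁, Q₀, f', g', h', hf'⟩ := hW
  obtain ⟨k, i, r, hr⟩ := id hMW
  have hfW : Ev f W := ev_compare h ((hEv M).2 hMU) (h'.pi k) i r (LinearMap.congr_fun hr)
    (hf'.compLeft k) (fun Q _ _ _ _ hQ => (hP Q hQ).hom_zero hPW)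
  have hUW : Gen R U W := (hEv W).1 hfW
  obtain ⟨m, π, hπ⟩ := right_approx (R := R) M W
  have hs : Function.Surjective π := by
    obtain ⟨l, p, hp⟩ := hUM.gen.trans hUW
    intro w
    obtain ⟨x, rfl⟩ := hp w
    rw [← LinearMap.mem_range]
    have : LinearMap.range p ≤ LinearMap.range π := by
      rw [LinearMap.range_eq_map, ← LinearMap.iSup_range_single, Submodule.map_iSup]
      refine iSup_le fun j => ?_
      rw [← LinearMap.range_comp]
      obtain ⟨c, hc⟩ := hπ (p ∘ₗ LinearMap.single R (fun _ => M) j)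
      rw [← hc]
      exact LinearMap.range_comp_le_range _ _
    exact this ⟨x, rfl⟩
  have hL : Ev f (LinearMap.ker π) := Ev.kernel h (((hEv M).2 hMU).pi (Fin m)) π hπ
  have hL' : Gen R W (LinearMap.ker π) := hMW.gen.trans (hUM.gen.trans ((hEv _).1 hL))
  haveI := h'.pr1
  obtain ⟨s, hs'⟩ := lift_map h' π hs (hf'.gen hL') LinearMap.id
  exact ⟨m, s, π, hs'⟩

theorem exists_basic (M : Type) [AddCommGroup M] [Module R M] [Module.Finite R M] :
    ∃ B : ModuleCat.{0} R, IsAdd R B M ∧ IsAdd R M B ∧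
      ∀ (N X : Type) [AddCommGroup N] [Module R N] [AddCommGroup X] [Module R X],
        Nonempty (B ≃ₗ[R] ((N × N) × X)) → Subsingleton N := by
  classical
  have hex : ∃ (n : ℕ) (B : ModuleCat.{0} R), (IsAdd R B M ∧ IsAdd R M B) ∧ len R B = n :=
    ⟨_, ModuleCat.of R M, ⟨IsAdd.refl, IsAdd.refl⟩, rfl⟩
  obtain ⟨B, ⟨h1, h2⟩, h3⟩ := Nat.find_spec hex
  refine ⟨B, h1, h2, ?_⟩
  rintro N X _ _ _ _ ⟨e⟩
  haveI : Module.Finite R B := h1.finite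
  haveI : Module.Finite R ((N × N) × X) := Module.Finite.equiv e
  haveI : Module.Finite R (N × N) := Module.Finite.of_surjective (LinearMap.fst R (N × N) X)
    Prod.fst_surjective
  haveI : Module.Finite R N := Module.Finite.of_surjective (LinearMap.fst R N N)
    Prod.fst_surjective
  haveI : Module.Finite R X := Module.Finite.of_surjective (LinearMap.snd R (N × N) X)
    Prod.snd_surjective
  have hB : IsAdd R B (N × X) := by
    have hN : IsAdd R N (N × X) := IsAdd.refl.retract (LinearMap.inl R N X) (LinearMap.fst R N X)
      (by ext; simp)
    have hX : IsAdd R X (N × X) := IsAdd.refl.retract (LinearMap.inr R N X) (LinearMap.snd R N X)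
      (by ext; simp)
    exact ((hN.prod hN).prod hX).trans (IsAdd.equiv e)
  have hB' : IsAdd R (N × X) B := by
    have h5 : IsAdd R ((N × N) × X) B := IsAdd.equiv e.symm
    exact h5.retract (LinearMap.prodMap (LinearMap.inl R N N) LinearMap.id)
      (LinearMap.prodMap (LinearMap.fst R N N) LinearMap.id) (by ext <;> simp)
  have h4 := Nat.find_min' hex ⟨ModuleCat.of R (N × X), ⟨h1.trans hB', hB.trans h2⟩, rfl⟩
  rw [← h3] at h4
  have h5 : len R B = len R ((N × N) × X) :=
    le_antisymm (len_le_inj e.toLinearMap e.injective) (len_le_surj e.toLinearMap e.surjective)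
  rw [h5, len_prod, len_prod] at h4
  change _ ≤ len R (N × X) at h4
  rw [len_prod] at h4
  rw [← len_eq_zero (R := R)]
  omega

end cob


section bridge

theorem isTauRigidMod_iff (M : ModCat R) : IsTauRigidMod M ↔ TauRigid R M := by
  constructor
  · rintro ⟨P₁, P₀, f, g, h1, h2, h3, h4, h5, h6, h7⟩
    refine ⟨P₁, P₀, f.hom, g.hom, ⟨h3, h4, (IsProjective.iff_projective P₁).2 h1,
      (IsProjective.iff_projective P₀).2 h2, h5, h6⟩, ?_⟩
    intro t
    obtain ⟨k, hk⟩ := h7 (ModuleCat.ofHom t)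
    exact ⟨k.hom, by simpa using congrArg ModuleCat.Hom.hom hk⟩
  · rintro ⟨P₁, P₀, f, g, h, hf⟩
    refine ⟨P₁, P₀, ModuleCat.ofHom f, ModuleCat.ofHom g, (IsProjective.iff_projective P₁).1 h.pr1,
      (IsProjective.iff_projective P₀).1 h.pr0, h.fin1, h.fin0, h.surj, h.exact, ?_⟩
    intro t
    obtain ⟨k, hk⟩ := hf t.hom
    exact ⟨ModuleCat.ofHom k, by ext x; exact LinearMap.congr_fun hk x⟩

theorem memAddMod_of (N M : ModCat R) (h : IsAdd R N M) : MemAddMod N M := by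
  obtain ⟨k, g, p, hp⟩ := h
  let e := ModuleCat.biproductIsoPi (fun _ : Fin k => M)
  refine ⟨k, ModuleCat.ofHom g ≫ e.inv, e.hom ≫ ModuleCat.ofHom p, ?_⟩
  simp only [Category.assoc, Iso.inv_hom_id_assoc]
  ext x
  exact LinearMap.congr_fun hp x

/-- linear equivalence of biproduct and product -/
def biprodEquiv (A B : ModCat R) : (A ⊞ B : ModCat R) ≃ₗ[R] (A × B) :=
  (ModuleCat.biprodIsoProd A B).toLinearEquiv

end bridge

/-- working form of tau-tilting finiteness -/
def TTF (R : Type) [Ring R] : Prop :=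
  ∃ (n : ℕ) (F : Fin n → ModuleCat.{0} R), ∀ (U : Type) [AddCommGroup U] [Module R U]
    [Module.Finite R U], TauRigid R U → ∃ i, Gen R U (F i) ∧ Gen R (F i) U

theorem TauRigid.equiv [ArtAlg R] {U W : Type} [AddCommGroup U] [Module R U] [AddCommGroup W]
    [Module R W] [Module.Finite R U] (e : W ≃ₗ[R] U) (h : TauRigid R U) : TauRigid R W :=
  h.isAdd (IsAdd.equiv e)

theorem ttf_of [ArtAlg R] (h : IsTauTiltingFiniteRing R) : TTF R := by
  obtain ⟨n, F, hF⟩ := h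
  refine ⟨n, F, ?_⟩
  intro U _ _ _ hU
  obtain ⟨M, P₁, P₀, f, g, hfin, hpres, hUM, hMU, hEv⟩ := cobongartz (R := R) U hU
  obtain ⟨P, hP1, hP2, hP3, hP4⟩ := exists_maxP (R := R) M
  obtain ⟨B, hBM, hMB, hbas⟩ := exists_basic (R := R) M
  haveI : Module.Finite R B := hBM.finite
  have hMr : TauRigid R M := TauRigid.mk hpres ((hEv M).2 hMU)
  have hBr : TauRigid R B := hMr.isAdd hBM
  have hB : IsBasicMod B := by
    rintro N X ⟨e⟩
    have := hbas N X ⟨e.toLinearEquiv.trans ((biprodEquiv (N ⊞ N) X).trans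
      ((biprodEquiv N N).prodCongr (LinearEquiv.refl R X)))⟩
    exact ModuleCat.isZero_of_subsingleton N
  have hBs : IsSupportTauTiltingMod B := by
    refine ⟨P, ⟨‹_›, (isTauRigidMod_iff B).2 hBr, hP1, (IsProjective.iff_projective P).1 hP2, ?_⟩, ?_⟩
    · intro t
      obtain ⟨k, i, r, hr⟩ := hBM
      ext x
      have h1 : i ∘ₗ t.hom = 0 := by
        apply LinearMap.ext
        intro x
        ext j
        exact LinearMap.congr_fun (hP3 (LinearMap.proj j ∘ₗ i ∘ₗ t.hom)) x
      have h2 := LinearMap.congr_fun hr (t.hom x)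
      have h3 := LinearMap.congr_fun h1 x
      simp only [LinearMap.comp_apply, LinearMap.zero_apply] at h2 h3
      rw [h3, map_zero] at h2
      exact h2.symm
    · rintro N Q ⟨hf1, hr1, hf2, hpr2, h0⟩
      let eN := biprodEquiv B N
      let eQ := biprodEquiv P Q
      haveI : Module.Finite R (B ⊞ N : ModCat R) := hf1
      haveI : Module.Finite R (P ⊞ Q : ModCat R) := hf2
      haveI : Module.Projective R (P ⊞ Q : ModCat R) := (IsProjective.iff_projective _).2 hpr2
      haveI : Module.Finite R (B × N) := Module.Finite.equiv eN
      haveI : Module.Finite R (P × Q) := Module.Finite.equiv eQ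
      haveI : Module.Projective R (P × Q) := Module.Projective.of_equiv eQ
      haveI : Module.Finite R Q := Module.Finite.of_surjective (LinearMap.snd R P Q)
        Prod.snd_surjective
      haveI : Module.Projective R Q := Module.Projective.of_split (LinearMap.inr R P Q)
        (LinearMap.snd R P Q) (LinearMap.snd_comp_inr R P Q)
      have hr : TauRigid R (B × N) := TauRigid.equiv eN.symm ((isTauRigidMod_iff _).1 hr1)
      have h0' : ∀ t : (P × Q) →ₗ[R] (B × N), t = 0 := by
        intro t
        have := h0 (ModuleCat.ofHom (eN.symm.toLinearMap ∘ₗ t ∘ₗ eQ.toLinearMap))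
        apply LinearMap.ext
        intro x
        have h1 := LinearMap.congr_fun (congrArg ModuleCat.Hom.hom this) (eQ.symm x)
        change eN.symm (t (eQ (eQ.symm x))) = 0 at h1
        simpa using h1
      have hMW : IsAdd R M (B × N) := (IsAdd.refl.retract (LinearMap.inl R B N)
        (LinearMap.fst R B N) (LinearMap.fst_comp_inl R B N) : IsAdd R B (B × N)).trans hMB
      constructor
      · have hW := max_lemma hpres hUM hMU hEv hP4 hr hMW (by
          intro t
          have := h0' (t ∘ₗ LinearMap.fst R P Q)
          apply LinearMap.ext
          intro x
          exact LinearMap.congr_fun this (x, 0))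
        exact memAddMod_of _ _ (hMB.trans (hW.retract (LinearMap.inr R B N)
          (LinearMap.snd R B N) (LinearMap.snd_comp_inr R B N)))
      · apply memAddMod_of
        apply hP4
        intro t
        obtain ⟨k, i, r, hr⟩ := hMB
        have h1 : ∀ s : Q →ₗ[R] B, s = 0 := by
          intro s
          have := h0' (LinearMap.inl R B N ∘ₗ s ∘ₗ LinearMap.snd R P Q)
          apply LinearMap.ext
          intro x
          exact congrArg Prod.fst (LinearMap.congr_fun this (0, x))
        have h2 : i ∘ₗ t = 0 := by
          apply LinearMap.ext
          intro x
          ext j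
          exact LinearMap.congr_fun (h1 (LinearMap.proj j ∘ₗ i ∘ₗ t)) x
        rw [← LinearMap.id_comp t, ← hr, LinearMap.comp_assoc, h2, LinearMap.comp_zero]
  obtain ⟨i, ⟨e⟩⟩ := hF B hBs hB
  refine ⟨i, ?_, ?_⟩
  · exact (hMU.trans hBM.gen).quot e.toLinearEquiv.toLinearMap e.toLinearEquiv.surjective
  · have h1 : Gen R (F i) B := Gen.refl.quot e.toLinearEquiv.symm.toLinearMap
      e.toLinearEquiv.symm.surjective
    exact h1.trans (hMB.gen.trans hUM.gen)


/-- bricks -/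
def Brick (R : Type) [Ring R] (B : Type) [AddCommGroup B] [Module R B] : Prop :=
  Nontrivial B ∧ ∀ t : B →ₗ[R] B, t = 0 ∨ Function.Bijective t

section dij
variable [ArtAlg R]

theorem tauRigid_self : TauRigid R R := by
  refine TauRigid.mk (P₁ := PUnit) (P₀ := R) (f := 0) (g := LinearMap.id)
    ⟨inferInstance, inferInstance, inferInstance, inferInstance, fun x => ⟨x, rfl⟩, ?_⟩ ?_
  · intro x
    constructor
    · intro h; exact ⟨0, h.symm⟩
    · rintro ⟨y, rfl⟩; rfl
  · intro t
    refine ⟨0, ?_⟩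
    apply LinearMap.ext
    intro x
    rw [show x = 0 from rfl, map_zero, map_zero]

theorem surj_of_factor {M Y W : Type} [AddCommGroup M] [Module R M] [AddCommGroup Y] [Module R Y]
    [AddCommGroup W] [Module R W] (hG : Gen R M W) (π : Y →ₗ[R] W)
    (hπ : ∀ t : M →ₗ[R] W, ∃ c : M →ₗ[R] Y, π ∘ₗ c = t) : Function.Surjective π := by
  obtain ⟨l, p, hp⟩ := hG
  intro w
  obtain ⟨x, rfl⟩ := hp w
  rw [← LinearMap.mem_range]
  have : LinearMap.range p ≤ LinearMap.range π := by
    rw [LinearMap.range_eq_map, ← LinearMap.iSup_range_single, Submodule.map_iSup]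
    refine iSup_le fun j => ?_
    rw [← LinearMap.range_comp]
    obtain ⟨c, hc⟩ := hπ (p ∘ₗ LinearMap.single R (fun _ => M) j)
    rw [← hc]
    exact LinearMap.range_comp_le_range _ _
  exact this ⟨x, rfl⟩

theorem exists_minimal_approx (M B : Type) [AddCommGroup M] [Module R M] [AddCommGroup B]
    [Module R B] [Module.Finite R M] [Module.Finite R B] :
    ∃ (X : ModuleCat.{0} R) (p : X →ₗ[R] B), IsAdd R X M ∧
      (∀ t : M →ₗ[R] B, ∃ c : M →ₗ[R] X, p ∘ₗ c = t) ∧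
      ∀ e : Module.End R X, p ∘ₗ e = p → Function.Bijective e := by
  classical
  have hex : ∃ (n : ℕ) (X : ModuleCat.{0} R) (p : X →ₗ[R] B), (IsAdd R X M ∧
      (∀ t : M →ₗ[R] B, ∃ c : M →ₗ[R] X, p ∘ₗ c = t)) ∧ len R X = n := by
    obtain ⟨m, p, hp⟩ := right_approx (R := R) M B
    exact ⟨_, ModuleCat.of R (Fin m → M), p, ⟨IsAdd.refl.pi m, hp⟩, rfl⟩
  obtain ⟨X, p, ⟨h1, h2⟩, h3⟩ := Nat.find_spec hex
  refine ⟨X, p, h1, h2, ?_⟩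
  intro e he
  haveI : Module.Finite R X := h1.finite
  obtain ⟨n, hn1, hn⟩ := (e.eventually_isCompl_ker_pow_range_pow.and
    (Filter.eventually_ge_atTop 1)).exists
  have he' : ∀ n x, p ((e ^ n) x) = p x := by
    intro n
    induction n with
    | zero => simp
    | succ n ih =>
      intro x
      have : p (e x) = p x := LinearMap.congr_fun he x
      rw [pow_succ]; simp [ih, this]
  refine bij_of_range_pow e n (by omega) ?_
  rw [h3]
  refine Nat.find_min' hex ⟨ModuleCat.of R (LinearMap.range (e ^ n)),
    p ∘ₗ (LinearMap.range (e ^ n)).subtype, ⟨?_, ?_⟩, rfl⟩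
  · exact h1.retract (LinearMap.range (e ^ n)).subtype (Submodule.projectionOnto _ _ hn1.symm)
      (by ext x; simp)
  · intro t
    obtain ⟨c, hc⟩ := h2 t
    refine ⟨(LinearMap.rangeRestrict (e ^ n)) ∘ₗ c, ?_⟩
    apply LinearMap.ext
    intro x
    rw [← hc]
    exact he' n (c x)

theorem jac_of_comp {X B : Type} [AddCommGroup X] [Module R X] [AddCommGroup B] [Module R B]
    (p : X →ₗ[R] B) (hp : ∀ e : Module.End R X, p ∘ₗ e = p → Function.Bijective e)
    (s : Module.End R X) (hs : p ∘ₗ s = 0) : s ∈ Ring.jacobson (Module.End R X) := by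
  rw [← Ideal.jacobson_bot, Ideal.mem_jacobson_iff]
  intro y
  have hb : Function.Bijective (1 + s * y : Module.End R X) := by
    apply hp
    apply LinearMap.ext
    intro x
    have : p (s (y x)) = 0 := LinearMap.congr_fun hs (y x)
    simp [this]
  have hu : IsUnit (1 + s * y) := (Module.End.isUnit_iff _).2 hb
  obtain ⟨w, hw⟩ := hu.exists_left_inv
  refine ⟨1 - y * w * s, ?_⟩
  rw [Ideal.mem_bot]
  have : (1 - y * w * s) * y * s + (1 - y * w * s) - 1 = y * s - y * (w * (1 + s * y)) * s := by
    noncomm_ring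
  rw [this, hw]
  simp

theorem dij (hT : TTF R) (B : Type) [AddCommGroup B] [Module R B] [Module.Finite R B] :
    ∃ X : ModuleCat.{0} R, Module.Finite R X ∧ TauRigid R X ∧ Gen R X B ∧ TB R B X := by
  classical
  obtain ⟨n, F, hF⟩ := hT
  have hex : ∃ (m : ℕ) (U : ModuleCat.{0} R), (Module.Finite R U ∧ TauRigid R U ∧ Gen R U B) ∧
      (Finset.univ.filter (fun i => Gen R U (F i))).card = m := by
    obtain ⟨k, p, hp⟩ := Module.Finite.exists_fin' R B
    exact ⟨_, ModuleCat.of R R, ⟨inferInstanceAs (Module.Finite R R), tauRigid_self, k, p, hp⟩, rfl⟩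
  obtain ⟨U, ⟨hU1, hU2, hU3⟩, hU4⟩ := Nat.find_spec hex
  have hmin : ∀ (X : Type) [AddCommGroup X] [Module R X] [Module.Finite R X], TauRigid R X →
      Gen R X B → Gen R U X → Gen R X U := by
    intro X _ _ _ hX hXB hUX
    have h1 := Nat.find_min' hex ⟨ModuleCat.of R X, ⟨‹_›, hX, hXB⟩, rfl⟩
    rw [← hU4] at h1
    have hsub : (Finset.univ.filter (fun i => Gen R X (F i))) ⊆
        (Finset.univ.filter (fun i => Gen R U (F i))) := by
      intro i hi
      rw [Finset.mem_filter] at hi ⊢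
      exact ⟨hi.1, hUX.trans hi.2⟩
    have heq := Finset.eq_of_subset_of_card_le hsub h1
    obtain ⟨i, hi1, hi2⟩ := hF U hU2
    have hi : i ∈ Finset.univ.filter (fun i => Gen R X (F i)) := by
      rw [heq, Finset.mem_filter]; exact ⟨Finset.mem_univ _, hi1⟩
    exact (Finset.mem_filter.1 hi).2.trans hi2
  obtain ⟨M, P₁, P₀, f, g, hfin, hpres, hUM, hMU, hEv⟩ := cobongartz (R := R) U hU2
  obtain ⟨X, p, hXM, hpf, hpe⟩ := exists_minimal_approx (R := R) M B
  haveI : Module.Finite R X := hXM.finite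
  have hMr : TauRigid R M := TauRigid.mk hpres ((hEv M).2 hMU)
  have hXr : TauRigid R X := hMr.isAdd hXM
  have hps : Function.Surjective p := surj_of_factor (hUM.gen.trans hU3) p hpf
  have hXB : Gen R X B := Gen.refl.quot p hps
  have hUX : Gen R U X := hMU.trans hXM.gen
  have hXU : Gen R X U := hmin X hXr hXB hUX
  have hL : Gen R X (LinearMap.ker p) :=
    hXU.trans ((hEv _).1 (Ev.kernel hpres ((hEv X).2 hUX) p hpf))
  refine ⟨X, ‹_›, hXr, hXB, ?_⟩
  intro N _ _ hN t
  by_contra ht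
  obtain ⟨K, hK⟩ := ArtAlg.nil (R := R) X
  have hstep : ∀ k : ℕ, ∃ a ∈ (Ring.jacobson (Module.End R X)) ^ k, t ∘ₗ a ≠ 0 := by
    intro k
    induction k with
    | zero => exact ⟨1, by rw [Submodule.pow_zero, Ideal.one_eq_top]; trivial, by rw [show t ∘ₗ (1 : Module.End R X) = t from rfl]; exact ht⟩
    | succ k ih =>
      obtain ⟨a, ha, hta⟩ := ih
      by_contra hcon
      push Not at hcon
      apply hta
      obtain ⟨l, q, hq⟩ := hL
      have h1 : t ∘ₗ a ∘ₗ (LinearMap.ker p).subtype = 0 := by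
        rw [← LinearMap.cancel_right hq, LinearMap.zero_comp]
        apply LinearMap.pi_ext'
        intro j
        let s : Module.End R X := (LinearMap.ker p).subtype ∘ₗ q ∘ₗ
          LinearMap.single R (fun _ => X) j
        have hs : s ∈ Ring.jacobson (Module.End R X) := by
          apply jac_of_comp p hpe
          apply LinearMap.ext
          intro x
          exact (q (Pi.single j x)).2
        have := hcon (a * s) (by rw [Submodule.pow_succ]; exact Ideal.mul_mem_mul ha hs)
        exact this
      obtain ⟨s, hs⟩ := desc_ker hps (t ∘ₗ a) (by
        intro x hx
        exact LinearMap.congr_fun h1 ⟨x, hx⟩)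
      rw [← hs, hN s, LinearMap.zero_comp]
  obtain ⟨a, ha, hta⟩ := hstep K
  rw [hK] at ha
  apply hta
  rw [show a = 0 from ha]
  exact LinearMap.comp_zero t

theorem exists_nonzero_of_TB {B C : Type} [AddCommGroup B] [Module R B] [AddCommGroup C]
    [Module R C] (h : TB R B C) [Nontrivial C] : ∃ t : B →ₗ[R] C, t ≠ 0 := by
  by_contra hcon
  push Not at hcon
  have h1 := h C hcon LinearMap.id
  obtain ⟨x, hx⟩ := exists_ne (0 : C)
  exact hx (LinearMap.congr_fun h1 x)

theorem range_nontrivial {B C : Type} [AddCommGroup B] [Module R B] [AddCommGroup C]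
    [Module R C] (t : B →ₗ[R] C) (ht : t ≠ 0) : Nontrivial (LinearMap.range t) := by
  rw [Submodule.nontrivial_iff_ne_bot]
  intro h
  exact ht (LinearMap.range_eq_bot.1 h)

theorem brick_surj {B C : Type} [AddCommGroup B] [Module R B] [AddCommGroup C]
    [Module R C] (hC : Brick R C) (h : TB R C B) (t : B →ₗ[R] C) (ht : t ≠ 0) :
    Function.Surjective t := by
  have h1 : TB R C (LinearMap.range t) := h.gen (Gen.refl.quot _ t.surjective_rangeRestrict)
  haveI := range_nontrivial t ht
  obtain ⟨s, hs⟩ := exists_nonzero_of_TB h1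
  have h2 := (hC.2 ((LinearMap.range t).subtype ∘ₗ s)).resolve_left (by
    intro h0
    apply hs
    ext x
    exact LinearMap.congr_fun h0 x)
  intro c
  obtain ⟨x, hx⟩ := h2.2 c
  rw [← hx]
  exact (s x).2

theorem brick_iso {B C : Type} [AddCommGroup B] [Module R B] [AddCommGroup C]
    [Module R C] [Module.Finite R B] [Module.Finite R C] (hB : Brick R B) (hC : Brick R C)
    (h : TB R C B) (h' : TB R B C) : Nonempty (B ≃ₗ[R] C) := by
  haveI := hB.1
  haveI := hC.1
  obtain ⟨t, ht⟩ := exists_nonzero_of_TB h'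
  obtain ⟨s, hs⟩ := exists_nonzero_of_TB h
  have h1 := brick_surj hC h t ht
  have h2 := brick_surj hB h' s hs
  have h3 := len_le_surj s h2
  refine ⟨LinearEquiv.ofBijective t ⟨inj_of_len t ?_, h1⟩⟩
  have h4 := len_le_surj (LinearMap.range t).subtype (by
    intro x; exact ⟨⟨x, h1 x⟩, rfl⟩)
  omega

theorem finite_bricks (hT : TTF R) : ∃ (n : ℕ) (F : Fin n → ModuleCat.{0} R),
    ∀ (B : Type) [AddCommGroup B] [Module R B] [Module.Finite R B], Brick R B →
      ∃ i, Nonempty (B ≃ₗ[R] F i) := by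
  classical
  have hT' := hT
  obtain ⟨n, F, hF⟩ := hT'
  let idx : ModuleCat.{0} R → Fin n → Prop := fun B i => Module.Finite R B ∧ Brick R B ∧
    Gen R (F i) B ∧ TB R B (F i)
  refine ⟨n, fun i => if h : ∃ B, idx B i then h.choose else ModuleCat.of R PUnit, ?_⟩
  intro B _ _ _ hB
  obtain ⟨X, hX1, hX2, hX3, hX4⟩ := dij hT B
  obtain ⟨i, hi1, hi2⟩ := hF X hX2
  have hi : idx (ModuleCat.of R B) i := ⟨‹_›, hB, hi2.trans hX3, hX4.gen hi1⟩
  have hex : ∃ B, idx B i := ⟨_, hi⟩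
  refine ⟨i, ?_⟩
  change Nonempty (B ≃ₗ[R] ((if h : ∃ B, idx B i then h.choose else ModuleCat.of R PUnit :
    ModuleCat.{0} R)))
  rw [dif_pos hex]
  obtain ⟨c1, c2, c3, c4⟩ := hex.choose_spec
  exact brick_iso hB c2 (c4.gen hi.2.2.1) (hi.2.2.2.gen c3)

end dij

/-! ### Ext wrappers -/
section Ext
open CategoryTheory.Abelian
variable {A M Q V W B Y E P : Type} [AddCommGroup A] [Module R A] [AddCommGroup M] [Module R M]
  [AddCommGroup Q] [Module R Q] [AddCommGroup V] [Module R V] [AddCommGroup W] [Module R W]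
  [AddCommGroup B] [Module R B] [AddCommGroup Y] [Module R Y] [AddCommGroup E] [Module R E]
  [AddCommGroup P] [Module R P]

/-- vanishing of `Ext^n(V,B)` -/
def ExtZ (R : Type) [Ring R] (n : ℕ) (V B : Type) [AddCommGroup V] [Module R V]
    [AddCommGroup B] [Module R B] : Prop :=
  ∀ x : Ext (ModuleCat.of R V) (ModuleCat.of R B) n, x = 0

/-- short exact sequence -/
structure SES (i : A →ₗ[R] M) (p : M →ₗ[R] Q) : Prop where
  inj : Function.Injective i
  surj : Function.Surjective p
  exact : Function.Exact i p

/-- associated short complex -/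
def SES.sc {i : A →ₗ[R] M} {p : M →ₗ[R] Q} (h : SES i p) : ShortComplex (ModuleCat.{0} R) :=
  ShortComplex.mk (ModuleCat.ofHom i) (ModuleCat.ofHom p) (by
    rw [← ModuleCat.ofHom_comp, h.exact.linearMap_comp_eq_zero]; rfl)

theorem SES.se {i : A →ₗ[R] M} {p : M →ₗ[R] Q} (h : SES i p) : h.sc.ShortExact :=
  ModuleCat.shortComplex_shortExact _ h.exact h.inj h.surj

theorem SES.les_a {i : A →ₗ[R] M} {p : M →ₗ[R] Q} (h : SES i p) {n : ℕ}
    (h1 : ExtZ R n M Y) (h2 : ExtZ R (n+1) Q Y) : ExtZ R n A Y := by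
  intro x
  obtain ⟨x₂, h₂⟩ := Ext.contravariant_sequence_exact₁ h.se (ModuleCat.of R Y) x (n₁ := n+1)
    (by omega) (h2 _)
  obtain rfl : x₂ = 0 := h1 x₂
  exact h₂.symm.trans (Ext.comp_zero _ _ _ _ _)

theorem SES.les_b {i : A →ₗ[R] M} {p : M →ₗ[R] Q} (h : SES i p) {n : ℕ}
    (h1 : ExtZ R n A Y) (h2 : ExtZ R n Q Y) : ExtZ R n M Y := by
  intro x
  obtain ⟨x₂, h₂⟩ := Ext.contravariant_sequence_exact₂ h.se (ModuleCat.of R Y) x (h1 _)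
  obtain rfl : x₂ = 0 := h2 x₂
  exact h₂.symm.trans (Ext.comp_zero _ _ _ _ _)

theorem SES.les_b2 {i : A →ₗ[R] M} {p : M →ₗ[R] Q} (h : SES i p) {n : ℕ}
    (h1 : ExtZ R n A Y) (h2 : ExtZ R (n+1) M Y) : ExtZ R (n+1) Q Y := by
  intro x
  obtain ⟨x₂, h₂⟩ := Ext.contravariant_sequence_exact₃ h.se (ModuleCat.of R Y) x (n₀ := n)
    (h2 _) (by omega)
  obtain rfl : x₂ = 0 := h1 x₂
  exact h₂.symm.trans (Ext.comp_zero _ _ _ _ _)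

theorem SES.les_c {i : A →ₗ[R] M} {p : M →ₗ[R] Q} (h : SES i p) {n : ℕ}
    (h1 : ExtZ R n Y M) (h2 : ExtZ R (n+1) Y A) : ExtZ R n Y Q := by
  intro x
  obtain ⟨x₂, h₂⟩ := Ext.covariant_sequence_exact₃ (ModuleCat.of R Y) h.se x (n₁ := n+1)
    rfl (h2 _)
  obtain rfl : x₂ = 0 := h1 x₂
  exact h₂.symm.trans (Ext.zero_comp _ _ _ _ _)

theorem extZ_proj [Module.Projective R P] (n : ℕ) : ExtZ R (n+1) P Y := by
  intro x
  haveI : Projective (ModuleCat.of R P) := (IsProjective.iff_projective P).1 inferInstance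
  exact Ext.eq_zero_of_projective x

theorem SES.lift {i : A →ₗ[R] M} {p : M →ₗ[R] Q} (h : SES i p) (h1 : ExtZ R 1 W A)
    (t : W →ₗ[R] Q) : ∃ s : W →ₗ[R] M, p ∘ₗ s = t := by
  obtain ⟨x₂, h₂⟩ := Ext.covariant_sequence_exact₃ (ModuleCat.of R W) h.se
    (Ext.mk₀ (ModuleCat.ofHom t : ModuleCat.of R W ⟶ h.sc.X₃)) (n₁ := 1) rfl (h1 _)
  obtain ⟨s, rfl⟩ := (Ext.mk₀_bijective _ _).2 x₂
  rw [Ext.mk₀_comp_mk₀] at h₂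
  have := (Ext.mk₀_bijective _ _).1 h₂
  exact ⟨ModuleCat.Hom.hom s, congrArg ModuleCat.Hom.hom this⟩

theorem SES.extend {i : A →ₗ[R] M} {p : M →ₗ[R] Q} (h : SES i p) (h1 : ExtZ R 1 Q Y)
    (t : A →ₗ[R] Y) : ∃ s : M →ₗ[R] Y, s ∘ₗ i = t := by
  obtain ⟨x₂, h₂⟩ := Ext.contravariant_sequence_exact₁ h.se (ModuleCat.of R Y)
    (Ext.mk₀ (ModuleCat.ofHom t : h.sc.X₁ ⟶ ModuleCat.of R Y)) (n₁ := 1) rfl (h1 _)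
  obtain ⟨s, rfl⟩ := (Ext.mk₀_bijective _ _).2 x₂
  rw [Ext.mk₀_comp_mk₀] at h₂
  have := (Ext.mk₀_bijective _ _).1 h₂
  exact ⟨ModuleCat.Hom.hom s, congrArg ModuleCat.Hom.hom this⟩

theorem ses_ker {p : M →ₗ[R] Q} (hp : Function.Surjective p) :
    SES (LinearMap.ker p).subtype p :=
  ⟨Subtype.val_injective, hp, by intro x; simp⟩

theorem ses_quot (A : Submodule R M) : SES A.subtype A.mkQ :=
  ⟨Subtype.val_injective, A.mkQ_surjective, by intro x; simp⟩

theorem ses_range {i : A →ₗ[R] M} (hi : Function.Injective i) :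
    SES i (LinearMap.range i).mkQ :=
  ⟨hi, Submodule.mkQ_surjective _, by intro x; simp⟩

/-- pushout -/
theorem SES.pushout {i : A →ₗ[R] M} {p : M →ₗ[R] Q} (h : SES i p) (t : A →ₗ[R] B) :
    ∃ (E : ModuleCat.{0} R) (j : B →ₗ[R] E) (q : E →ₗ[R] Q) (s : M →ₗ[R] E),
      SES j q ∧ s ∘ₗ i = j ∘ₗ t ∧ q ∘ₗ s = p ∧ ∃ u : (B × M) →ₗ[R] E, Function.Surjective u := by
  let D : Submodule R (B × M) := LinearMap.range (LinearMap.prod t (-i))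
  have hD : D ≤ LinearMap.ker (p ∘ₗ LinearMap.snd R B M) := by
    rintro _ ⟨a, rfl⟩
    simp [h.exact.apply_apply_eq_zero]
  refine ⟨ModuleCat.of R ((B × M) ⧸ D), D.mkQ ∘ₗ LinearMap.inl R B M,
    D.liftQ (p ∘ₗ LinearMap.snd R B M) hD, D.mkQ ∘ₗ LinearMap.inr R B M, ⟨?_, ?_, ?_⟩, ?_, ?_,
    D.mkQ, D.mkQ_surjective⟩
  · rw [← LinearMap.ker_eq_bot, LinearMap.ker_eq_bot']
    intro b hb
    have : (b, (0:M)) ∈ D := by simpa using hb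
    obtain ⟨a, ha⟩ := this
    have h1 : i a = 0 := by simpa using congrArg Prod.snd ha
    have h2 : t a = b := congrArg Prod.fst ha
    rw [← h2, h.inj (h1.trans (map_zero i).symm), map_zero]
  · intro z
    obtain ⟨m, rfl⟩ := h.surj z
    exact ⟨D.mkQ (0, m), by simp⟩
  · intro x
    obtain ⟨⟨b, m⟩, rfl⟩ := D.mkQ_surjective x
    constructor
    · intro hx
      have hm : p m = 0 := by simpa using hx
      obtain ⟨a, rfl⟩ := (h.exact m).1 hm
      refine ⟨b + t a, ?_⟩
      simp only [LinearMap.comp_apply]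
      rw [Submodule.mkQ_apply, Submodule.mkQ_apply, Submodule.Quotient.eq]
      exact ⟨a, by simp⟩
    · rintro ⟨c, hc⟩
      rw [← hc]; simp
  · ext a
    simp only [LinearMap.comp_apply]
    rw [Submodule.mkQ_apply, Submodule.mkQ_apply, Submodule.Quotient.eq]
    exact ⟨-a, by simp⟩
  · ext m; simp

theorem extClass_comp_aux {S : ShortComplex (ModuleCat.{0} R)} (hS : S.ShortExact)
    {Y : ModuleCat.{0} R} (u : S.X₂ ⟶ Y) :
    hS.extClass.comp (Ext.mk₀ (S.f ≫ u)) (by rfl : 1 + 0 = 1) = 0 := by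
  rw [← Ext.mk₀_comp_mk₀]
  exact hS.extClass_comp_assoc _

theorem extZ_one_of_split
    (hs : ∀ (E : ModuleCat.{0} R) (j : B →ₗ[R] E) (q : E →ₗ[R] V), SES j q →
      ∃ s : V →ₗ[R] E, q ∘ₗ s = LinearMap.id) : ExtZ R 1 V B := by
  intro x
  have h := ses_ker (p := Finsupp.linearCombination R (id : V → V))
    (Finsupp.linearCombination_id_surjective R V)
  obtain ⟨x₁, h₁⟩ := Ext.contravariant_sequence_exact₃ h.se (ModuleCat.of R B) x (n₀ := 0)
    (extZ_proj 0 _) rfl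
  obtain ⟨t, rfl⟩ := (Ext.mk₀_bijective _ _).2 x₁
  obtain ⟨E, j, q, s, hE, h2, h3, -⟩ := h.pushout (ModuleCat.Hom.hom t)
  obtain ⟨σ, hσ⟩ := hs E j q hE
  -- retraction
  have hr : ∀ e : E, ∃ b, j b = e - σ (q e) := fun e => (hE.exact _).1 (by
    have := LinearMap.congr_fun hσ (q e); simp at this; simp [this])
  choose ρ hρ using hr
  let ρ' : E →ₗ[R] B :=
    { toFun := ρ
      map_add' := fun x y => hE.inj (by rw [map_add, hρ, hρ, hρ]; simp; abel)
      map_smul' := fun r x => hE.inj (by rw [RingHom.id_apply, map_smul, hρ, hρ]; simp [smul_sub]) }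
  have key : ∃ u : h.sc.X₂ ⟶ ModuleCat.of R B, h.sc.f ≫ u = t := by
    refine ⟨ModuleCat.ofHom (ρ' ∘ₗ s), ?_⟩
    ext y'
    let y : LinearMap.ker (Finsupp.linearCombination R (id : V → V)) := y'
    apply hE.inj
    have h4 := LinearMap.congr_fun h2 y
    have h5 : q (s (y : V →₀ R)) = 0 := by
      rw [← LinearMap.comp_apply, h3]; exact y.2
    change j (ρ (s (y : V →₀ R))) = _
    rw [hρ, h5, map_zero, sub_zero]
    exact h4
  obtain ⟨u, rfl⟩ := key
  exact h₁.symm.trans (extClass_comp_aux h.se u)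
end Ext

/-! ### Rigidity of bricks -/
/-- modules filtered by `B` -/
def Filt (R : Type) [Ring R] (B : Type) [AddCommGroup B] [Module R B] :
    ℕ → ModuleCat.{0} R → Prop
  | 0, V => Subsingleton V
  | n+1, V => ∃ (Q : ModuleCat.{0} R) (i : B →ₗ[R] V) (p : V →ₗ[R] Q), SES i p ∧ Filt R B n Q

section key
variable {B : Type} [AddCommGroup B] [Module R B]

theorem Filt.sub (hB : Brick R B) {n : ℕ} {V : ModuleCat.{0} R} (h : Filt R B n V)
    (φ : B →ₗ[R] V) (hφ : φ ≠ 0) : ∃ (m : ℕ) (Q : ModuleCat.{0} R) (p : V →ₗ[R] Q),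
      n = m + 1 ∧ SES φ p ∧ Filt R B m Q := by
  induction n generalizing V with
  | zero =>
    haveI : Subsingleton V := h
    exact absurd (Subsingleton.elim _ _) hφ
  | succ n ih =>
    obtain ⟨Q, i, p, hip, hQ⟩ := h
    by_cases hpφ : p ∘ₗ φ = 0
    · have h1 : ∀ b, ∃ b', i b' = φ b := fun b => (hip.exact _).1 (LinearMap.congr_fun hpφ b)
      choose t ht using h1
      let t' : B →ₗ[R] B :=
        { toFun := t
          map_add' := fun x y => hip.inj (by rw [map_add, ht, ht, ht, map_add])
          map_smul' := fun r x => hip.inj (by rw [RingHom.id_apply, map_smul, ht, ht, map_smul]) }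
      have h2 : i ∘ₗ t' = φ := LinearMap.ext ht
      rcases hB.2 t' with h3 | h3
      · rw [h3, LinearMap.comp_zero] at h2
        exact absurd h2.symm hφ
      · refine ⟨n, Q, p, rfl, ⟨?_, hip.surj, ?_⟩, hQ⟩
        · rw [← h2]; exact hip.inj.comp h3.1
        · intro x
          rw [hip.exact x]
          constructor
          · rintro ⟨b, rfl⟩
            obtain ⟨b', rfl⟩ := h3.2 b
            exact ⟨b', LinearMap.congr_fun h2.symm b'⟩
          · rintro ⟨b, rfl⟩
            exact ⟨t b, ht b⟩
    · obtain ⟨m, Q', p', rfl, hs, hF⟩ := ih hQ (p ∘ₗ φ) hpφ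
      have hinj : Function.Injective φ := fun x y hxy => hs.inj (by simp [hxy])
      let A := LinearMap.range φ
      refine ⟨m+1, ModuleCat.of R (V ⧸ A), A.mkQ, rfl, ses_range hinj, ?_⟩
      have hle : A ≤ LinearMap.ker (p' ∘ₗ p) := by
        rintro _ ⟨b, rfl⟩
        have := hs.exact.linearMap_comp_eq_zero
        exact LinearMap.congr_fun this b
      refine ⟨Q', A.mkQ ∘ₗ i, A.liftQ (p' ∘ₗ p) hle, ⟨?_, ?_, ?_⟩, hF⟩
      · rw [← LinearMap.ker_eq_bot, LinearMap.ker_eq_bot']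
        intro b hb
        have : i b ∈ A := by simpa using hb
        obtain ⟨b', hb'⟩ := this
        have h4 : (p ∘ₗ φ) b' = 0 := by
          rw [LinearMap.comp_apply, hb', hip.exact.apply_apply_eq_zero]
        have h5 : b' = 0 := hs.inj (by rw [h4, map_zero])
        rw [h5, map_zero] at hb'
        exact hip.inj (by rw [← hb', map_zero])
      · intro z
        obtain ⟨y, rfl⟩ := hs.surj z
        obtain ⟨x, rfl⟩ := hip.surj y
        exact ⟨A.mkQ x, by simp⟩
      · intro x
        obtain ⟨x, rfl⟩ := A.mkQ_surjective x
        constructor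
        · intro hx
          have hx' : p' (p x) = 0 := by simpa using hx
          obtain ⟨b, hb⟩ := (hs.exact _).1 hx'
          have : p (x - φ b) = 0 := by
            rw [map_sub, ← hb]; simp
          obtain ⟨c, hc⟩ := (hip.exact _).1 this
          refine ⟨c, ?_⟩
          rw [LinearMap.comp_apply, hc, map_sub, sub_eq_self]
          simp [A]
        · rintro ⟨c, hc⟩
          rw [← hc]
          simp [hip.exact.apply_apply_eq_zero]

theorem Filt.of_inj [ArtAlg R] (hB : Brick R B) {n : ℕ} {V : ModuleCat.{0} R} (h : Filt R B n V)
    (I : ModuleCat.{0} R) (j : I →ₗ[R] V) (hj : Function.Injective j) (hI : TB R B I) :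
    ∃ m, Filt R B m I := by
  induction n generalizing V I with
  | zero =>
    haveI : Subsingleton V := h
    exact ⟨0, hj.subsingleton⟩
  | succ n ih =>
    rcases subsingleton_or_nontrivial I with h0 | h0
    · exact ⟨0, h0⟩
    obtain ⟨t, ht⟩ := exists_nonzero_of_TB hI
    have hjt : j ∘ₗ t ≠ 0 := by
      intro h1
      apply ht
      ext x
      exact hj (by simpa using LinearMap.congr_fun h1 x)
    obtain ⟨m, Q, p, hm, hs, hQ⟩ := h.sub hB (j ∘ₗ t) hjt
    obtain rfl : n = m := by omega
    have htinj : Function.Injective t := fun x y hxy => hs.inj (by simp [hxy])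
    have hle : LinearMap.range t ≤ LinearMap.ker (p ∘ₗ j) := by
      rintro _ ⟨b, rfl⟩
      exact LinearMap.congr_fun hs.exact.linearMap_comp_eq_zero b
    obtain ⟨k, hk⟩ := ih hQ (ModuleCat.of R (I ⧸ LinearMap.range t))
      ((LinearMap.range t).liftQ (p ∘ₗ j) hle) (by
        rw [← LinearMap.ker_eq_bot, Submodule.ker_liftQ_eq_bot]
        intro x hx
        obtain ⟨b, hb⟩ := (hs.exact _).1 hx
        exact ⟨b, hj hb⟩)
      (hI.gen (Gen.refl.quot _ (Submodule.mkQ_surjective _)))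
    exact ⟨k+1, _, t, _, ses_range htinj, hk⟩

theorem Filt.tb {n : ℕ} {V : ModuleCat.{0} R} (h : Filt R B n V) : TB R B V := by
  induction n generalizing V with
  | zero =>
    haveI : Subsingleton V := h
    intro N _ _ _ t
    exact Subsingleton.elim _ _
  | succ n ih =>
    obtain ⟨Q, i, p, hip, hQ⟩ := h
    exact TB.refl.ext i p hip.surj hip.exact (ih hQ)

theorem Filt.ext2 (h2 : ExtZ R 2 B B) {n : ℕ} {V : ModuleCat.{0} R} (h : Filt R B n V) :
    ExtZ R 2 V B := by
  induction n generalizing V with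
  | zero =>
    haveI : Subsingleton V := h
    haveI : Module.Projective R V := Module.Projective.of_lifting_property'' fun f hf =>
      ⟨0, Subsingleton.elim _ _⟩
    exact extZ_proj 1
  | succ n ih =>
    obtain ⟨Q, i, p, hip, hQ⟩ := h
    exact hip.les_b h2 (ih hQ)

theorem Filt.ext1 (h1 : ¬ ExtZ R 1 B B) (h2 : ExtZ R 2 B B) {n : ℕ} {V : ModuleCat.{0} R}
    (h : Filt R B n V) [Nontrivial V] : ¬ ExtZ R 1 V B := by
  cases n with
  | zero =>
    haveI : Subsingleton V := h
    exact absurd h (not_subsingleton V)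
  | succ n =>
    obtain ⟨Q, i, p, hip, hQ⟩ := h
    exact fun h3 => h1 (hip.les_a h3 (hQ.ext2 h2))

theorem key_lemma [ArtAlg R] (hT : TTF R) [Module.Finite R B] (hB : Brick R B)
    (h2 : ExtZ R 2 B B) : ExtZ R 1 B B := by
  by_contra h1
  obtain ⟨X, hXf, ⟨P₁, P₀, f, g, hfg, hEv⟩, hXB, hBX⟩ := dij hT B
  haveI := hfg.pr1
  have hEvB : Ev f B := hEv.gen hXB
  -- images of X
  have himg : ∀ (n : ℕ) (E : ModuleCat.{0} R) (s : X →ₗ[R] E), Filt R B n E →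
      ∃ m, Filt R B m (ModuleCat.of R (LinearMap.range s)) := by
    intro n E s hE
    exact hE.of_inj hB (ModuleCat.of R (LinearMap.range s)) (LinearMap.range s).subtype
      Subtype.val_injective (hBX.gen (Gen.refl.quot _ s.surjective_rangeRestrict))
  have main : ∀ k : ℕ, ∃ (n : ℕ) (V : ModuleCat.{0} R) (π : X →ₗ[R] V), Function.Surjective π ∧
      Nontrivial V ∧ Filt R B n V ∧ k ≤ len R V := by
    intro k
    induction k with
    | zero =>
      have hB1 : Filt R B 1 (ModuleCat.of R B) :=
        ⟨ModuleCat.of R PUnit, LinearMap.id, 0, ⟨fun x y h => h, fun x => ⟨0, Subsingleton.elim _ _⟩,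
          fun x => ⟨fun _ => ⟨x, rfl⟩, fun _ => rfl⟩⟩, inferInstanceAs (Subsingleton PUnit)⟩
      have ht : ∃ t : X →ₗ[R] B, t ≠ 0 := by
        by_contra hcon
        push Not at hcon
        have h3 := hXB.hom_zero hcon LinearMap.id
        haveI := hB.1
        obtain ⟨b, hb⟩ := exists_ne (0 : B)
        exact hb (LinearMap.congr_fun h3 b)
      obtain ⟨t, ht⟩ := ht
      obtain ⟨m, hm⟩ := himg 1 (ModuleCat.of R B) t hB1
      exact ⟨m, _, t.rangeRestrict, t.surjective_rangeRestrict, range_nontrivial t ht, hm,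
        Nat.zero_le _⟩
    | succ k ih =>
      obtain ⟨n, V, π, hπ, hVn, hV, hk⟩ := ih
      have h3 := hV.ext1 h1 h2
      have h4 : ∃ (E : ModuleCat.{0} R) (j : B →ₗ[R] E) (q : E →ₗ[R] V), SES j q ∧
          ¬ ∃ s : V →ₗ[R] E, q ∘ₗ s = LinearMap.id := by
        by_contra hcon
        push Not at hcon
        exact h3 (extZ_one_of_split fun E j q hjq => by
          obtain ⟨s, hs⟩ := hcon E j q hjq
          exact ⟨s, hs⟩)
      obtain ⟨E, j, q, hjq, hns⟩ := h4
      have hEvk : Ev f (LinearMap.ker q) := by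
        refine hEvB.quot (j.codRestrict (LinearMap.ker q)
          fun b => hjq.exact.apply_apply_eq_zero b) ?_
        rintro ⟨x, hx⟩
        obtain ⟨b, hb⟩ := (hjq.exact x).1 hx
        exact ⟨b, Subtype.ext hb⟩
      obtain ⟨s, hs⟩ := lift_map hfg q hjq.surj hEvk π
      obtain ⟨m, hm⟩ := himg (n+1) E s ⟨V, j, q, hjq, hV⟩
      let qI : LinearMap.range s →ₗ[R] V := q ∘ₗ (LinearMap.range s).subtype
      have hqI : Function.Surjective qI := by
        intro v
        obtain ⟨x, rfl⟩ := hπ v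
        exact ⟨⟨s x, x, rfl⟩, LinearMap.congr_fun hs x⟩
      haveI : Module.Finite R V := Module.Finite.of_surjective π hπ
      haveI : Module.Finite R (LinearMap.range s) :=
        Module.Finite.of_surjective s.rangeRestrict s.surjective_rangeRestrict
      refine ⟨m, _, s.rangeRestrict, s.surjective_rangeRestrict, hqI.nontrivial, hm, ?_⟩
      by_contra hlt
      have hle : len R (LinearMap.range s) ≤ len R V := by
        have : len R (ModuleCat.of R (LinearMap.range s)) = len R (LinearMap.range s) := rfl
        omega
      apply hns
      have hin : Function.Injective qI := inj_of_len qI (by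
        have := len_le_surj (Submodule.subtype _ : LinearMap.range qI →ₗ[R] V)
          (by rw [← LinearMap.range_eq_top, Submodule.range_subtype,
                LinearMap.range_eq_top]; exact hqI)
        omega)
      let e := LinearEquiv.ofBijective qI ⟨hin, hqI⟩
      refine ⟨(LinearMap.range s).subtype ∘ₗ e.symm.toLinearMap, ?_⟩
      ext v
      exact e.apply_symm_apply v
  obtain ⟨n, V, π, hπ, -, -, hk⟩ := main (len R X + 1)
  haveI : Module.Finite R V := Module.Finite.of_surjective π hπ
  have := len_le_surj π hπ
  omega
end key

/-! ### Indecomposables are bricks -/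
/-- indecomposable -/
def Indec (R : Type) [Ring R] (M : Type) [AddCommGroup M] [Module R M] : Prop :=
  Nontrivial M ∧ ∀ A B : Submodule R M, IsCompl A B → A = ⊥ ∨ B = ⊥

/-- the data extracted from a tilting object -/
structure YData (R : Type) [Ring R] (Y : ModuleCat.{0} R → Prop) : Prop where
  iso : ∀ (M N : ModuleCat.{0} R), (M ≃ₗ[R] N) → Y M → Y N
  self : Y (ModuleCat.of R R)
  split : ∀ M : ModuleCat.{0} R, Module.Finite R M → ∃ A B : Submodule R M, IsCompl A B ∧
    Y (ModuleCat.of R A) ∧ ∀ N : ModuleCat.{0} R, Y N → ∀ t : B →ₗ[R] N, t = 0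
  pd : ∀ M : ModuleCat.{0} R, Module.Finite R M → Y M → ∃ (n : ℕ) (π : (Fin n → R) →ₗ[R] M),
    Function.Surjective π ∧ Module.Projective R (LinearMap.ker π)

section ringel
variable [ArtAlg R] {Y : ModuleCat.{0} R → Prop}
variable {M C : Type} [AddCommGroup M] [Module R M] [AddCommGroup C] [Module R C]

theorem YData.cases (hY : YData R Y) [Module.Finite R M] (hM : Indec R M) :
    Y (ModuleCat.of R M) ∨ ∀ N : ModuleCat.{0} R, Y N → ∀ t : M →ₗ[R] N, t = 0 := by
  obtain ⟨A, B, hAB, hA, hB⟩ := hY.split (ModuleCat.of R M) (inferInstanceAs (Module.Finite R M))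
  rcases hM.2 A B hAB with h | h
  · right
    intro N hN t
    have hB' : B = ⊤ := by have := hAB.sup_eq_top; rwa [h, bot_sup_eq] at this
    subst hB'
    have := hB N hN (t ∘ₗ (⊤ : Submodule R M).subtype)
    ext x
    exact LinearMap.congr_fun this ⟨x, trivial⟩
  · left
    have hA' : A = ⊤ := by have := hAB.sup_eq_top; rwa [h, sup_bot_eq] at this
    subst hA'
    exact hY.iso _ (ModuleCat.of R M) (Submodule.topEquiv (R := R) (M := M)) hA

theorem YData.ext2Y (hY : YData R Y) [Module.Finite R M] (hM : Y (ModuleCat.of R M)) :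
    ExtZ R 2 M C := by
  obtain ⟨n, π, hπ, hp⟩ := hY.pd (ModuleCat.of R M) (inferInstanceAs (Module.Finite R M)) hM
  exact (ses_ker hπ).les_b2 (extZ_proj 0) (extZ_proj 1)

theorem YData.ext2X (hY : YData R Y) [Module.Finite R M] [Module.Finite R C]
    (hM : ∀ N : ModuleCat.{0} R, Y N → ∀ t : M →ₗ[R] N, t = 0) :
    ExtZ R 2 C M := by
  obtain ⟨n, π, hπ⟩ := Module.Finite.exists_fin' R C
  refine (ses_ker hπ).les_b2 (extZ_one_of_split fun E j q hjq => ?_) (extZ_proj 1)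
  haveI : Module.Finite R E := by
    haveI : Module.Finite R (LinearMap.range j) :=
      Module.Finite.of_surjective j.rangeRestrict j.surjective_rangeRestrict
    haveI : Module.Finite R (E ⧸ LinearMap.range j) := by
      rw [show LinearMap.range j = LinearMap.ker q from (LinearMap.exact_iff.1 hjq.exact).symm]
      exact Module.Finite.equiv (q.quotKerEquivOfSurjective hjq.surj).symm
    exact Module.Finite.of_submodule_quotient (LinearMap.range j)
  obtain ⟨A, B, hAB, hA, hB⟩ := hY.split E inferInstance
  have h1 : LinearMap.range j ≤ B := by
    have := hM _ hA (A.projectionOnto B hAB ∘ₗ j)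
    rintro _ ⟨x, rfl⟩
    have := LinearMap.congr_fun this x
    simpa using this
  have h2 : B ≤ LinearMap.range j := by
    intro b hb
    refine (hjq.exact b).1 ?_
    apply Subtype.ext
    ext k
    exact LinearMap.congr_fun (hB _ hY.self (LinearMap.proj k ∘ₗ (LinearMap.ker π).subtype ∘ₗ q ∘ₗ
      B.subtype)) ⟨b, hb⟩
  have h3 : Function.Bijective (q ∘ₗ A.subtype) := by
    constructor
    · rw [← LinearMap.ker_eq_bot, LinearMap.ker_eq_bot']
      intro a ha
      have : (a : E) ∈ B := h1 ((hjq.exact _).1 ha)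
      exact Subtype.ext ((Submodule.disjoint_def.1 hAB.disjoint) _ a.2 this)
    · intro z
      obtain ⟨e, rfl⟩ := hjq.surj z
      have : e ∈ A ⊔ B := by rw [hAB.sup_eq_top]; trivial
      obtain ⟨a, ha, b, hb, rfl⟩ := Submodule.mem_sup.1 this
      refine ⟨⟨a, ha⟩, ?_⟩
      have : q b = 0 := (hjq.exact _).2 (h2 hb)
      simp [this]
  let e := LinearEquiv.ofBijective _ h3
  refine ⟨A.subtype ∘ₗ e.symm.toLinearMap, ?_⟩
  ext1 v
  exact e.apply_symm_apply v

theorem exists_indec_retract [Module.Finite R M] (P : (M →ₗ[R] M) → Prop) (h1 : P LinearMap.id)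
    (h0 : ¬ P 0) (hadd : ∀ a b, P (a + b) → P a ∨ P b) :
    ∃ (C : ModuleCat.{0} R) (i : C →ₗ[R] M) (r : M →ₗ[R] C), r ∘ₗ i = LinearMap.id ∧
      P (i ∘ₗ r) ∧ Indec R C := by
  have hex : ∃ (n : ℕ) (C : ModuleCat.{0} R) (i : C →ₗ[R] M) (r : M →ₗ[R] C),
      r ∘ₗ i = LinearMap.id ∧ P (i ∘ₗ r) ∧ len R C = n :=
    ⟨_, ModuleCat.of R M, LinearMap.id, LinearMap.id, rfl, h1, rfl⟩
  classical
  obtain ⟨C, i, r, hir, hP, hlen⟩ := Nat.find_spec hex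
  have hmin := fun m => Nat.find_min hex (m := m)
  rw [← hlen] at hmin
  haveI : Module.Finite R C := Module.Finite.of_surjective r
    (fun c => ⟨i c, LinearMap.congr_fun hir c⟩)
  refine ⟨C, i, r, hir, hP, ?_, ?_⟩
  · by_contra hcon
    rw [not_nontrivial_iff_subsingleton] at hcon
    apply h0
    convert hP
    ext x
    rw [LinearMap.comp_apply, Subsingleton.elim (r x) 0]; simp
  · have key : ∀ A B : Submodule R C, ∀ h : IsCompl A B,
        P ((i ∘ₗ A.subtype) ∘ₗ (A.projectionOnto B h ∘ₗ r)) → B = ⊥ := by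
      intro A B hAB hPA
      have hA : A = ⊤ := by
        by_contra hne
        have := len_lt_of_ne A hne
        refine hmin _ this ⟨ModuleCat.of R A, i ∘ₗ A.subtype, A.projectionOnto B hAB ∘ₗ r, ?_, hPA, rfl⟩
        ext1 a
        have : r (i a) = a := LinearMap.congr_fun hir a
        simp [this]
      have := hAB.inf_eq_bot
      rwa [hA, top_inf_eq] at this
    intro A B hAB
    have hsum : i ∘ₗ r = (i ∘ₗ A.subtype) ∘ₗ (A.projectionOnto B hAB ∘ₗ r) +
        (i ∘ₗ B.subtype) ∘ₗ (B.projectionOnto A hAB.symm ∘ₗ r) := by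
      ext x
      simp only [LinearMap.add_apply, LinearMap.comp_apply, Submodule.subtype_apply, ← map_add]
      congr 1
      exact (Submodule.projection_add_projection_eq_self hAB (r x)).symm
    rw [hsum] at hP
    rcases hadd _ _ hP with h | h
    · exact Or.inr (key A B hAB h)
    · exact Or.inl (key B A hAB.symm h)

theorem Indec.retract_inj (hM : Indec R M) [Nontrivial C] (s : C →ₗ[R] M) (r : M →ₗ[R] C)
    (h : r ∘ₗ s = LinearMap.id) : Function.Injective r := by
  have h' : ∀ c, r (s c) = c := LinearMap.congr_fun h
  have hc : IsCompl (LinearMap.range s) (LinearMap.ker r) := by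
    constructor
    · rw [Submodule.disjoint_def]
      rintro _ ⟨c, rfl⟩ hx
      rw [LinearMap.mem_ker, h'] at hx
      rw [hx, map_zero]
    · rw [codisjoint_iff, eq_top_iff]
      intro x _
      rw [← add_sub_cancel (s (r x)) x]
      exact Submodule.add_mem_sup ⟨_, rfl⟩ (by simp [h'])
  rcases hM.2 _ _ hc with h1 | h1
  · exfalso
    obtain ⟨c, hc⟩ := exists_ne (0 : C)
    rw [LinearMap.range_eq_bot] at h1
    apply hc
    rw [← h' c, h1]; simp
  · exact LinearMap.ker_eq_bot.1 h1

theorem indec_brick (hT : TTF R) (hY : YData R Y) : ∀ (n : ℕ) (M : Type) [AddCommGroup M]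
    [Module R M] [Module.Finite R M], len R M ≤ n → Indec R M → Brick R M := by
  intro n
  induction n with
  | zero =>
    intro M _ _ _ hn hM
    have : len R M = 0 := by omega
    rw [len_eq_zero] at this
    exact absurd this (not_subsingleton_iff_nontrivial.2 hM.1)
  | succ n ih =>
    intro M _ _ _ hn hM
    refine ⟨hM.1, ?_⟩
    by_contra hcon
    push Not at hcon
    let S : Set (M →ₗ[R] M) := {t | t ≠ 0 ∧ ¬ Function.Bijective t}
    obtain ⟨φ, ⟨hφ0, hφb⟩, hmin'⟩ := WellFounded.has_min
      (measure (fun t : M →ₗ[R] M => len R (LinearMap.range t))).wf S hcon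
    have hmin : ∀ t : M →ₗ[R] M, t ≠ 0 → ¬ Function.Bijective t →
        len R (LinearMap.range φ) ≤ len R (LinearMap.range t) := fun t h1 h2 =>
      not_lt.1 (hmin' t ⟨h1, h2⟩)
    clear hmin' hcon
    have hIlt : len R (LinearMap.range φ) < len R M := by
      by_contra h
      have h1 := inj_of_len φ (by omega)
      exact hφb ⟨h1, surj_of_len φ h1 le_rfl⟩
    have hKlt : len R (LinearMap.ker φ) < len R M := by
      refine len_lt_of_ne _ fun h => hφ0 (LinearMap.ker_eq_top.1 h)
    have nb : ∀ t : M →ₗ[R] M, len R (LinearMap.range t) ≤ len R (LinearMap.range φ) →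
        ¬ Function.Bijective t := by
      intro t ht hb
      have := len_le_inj t.rangeRestrict (by
        intro x y hxy
        exact hb.1 (congrArg Subtype.val hxy))
      omega
    -- square zero
    have hsq : φ ∘ₗ φ = 0 := by
      by_contra hne
      have hle : LinearMap.range (φ ∘ₗ φ) ≤ LinearMap.range φ := LinearMap.range_comp_le_range _ _
      have hl1 : len R (LinearMap.range (φ ∘ₗ φ)) ≤ len R (LinearMap.range φ) :=
        len_le_inj (Submodule.inclusion hle) (Submodule.inclusion_injective _)
      have hl2 := hmin _ hne (nb _ hl1)
      have heq : ∀ y, φ y ∈ LinearMap.range (φ ∘ₗ φ) := by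
        intro y
        have := surj_of_len (Submodule.inclusion hle) (Submodule.inclusion_injective _) hl2
        obtain ⟨z, hz⟩ := this ⟨φ y, y, rfl⟩
        have := congrArg Subtype.val hz
        simp only [Submodule.coe_inclusion] at this
        rw [← this]
        exact z.2
      have hinj : Function.Injective (φ ∘ₗ (LinearMap.range φ).subtype) := by
        apply inj_of_len
        rw [LinearMap.range_comp, Submodule.range_subtype, ← LinearMap.range_comp]
        exact hl2
      have hc : IsCompl (LinearMap.range φ) (LinearMap.ker φ) := by
        constructor
        · rw [Submodule.disjoint_def]
          intro x hx hx'
          have := @hinj ⟨x, hx⟩ 0 (by simpa using hx')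
          exact congrArg Subtype.val this
        · rw [codisjoint_iff, eq_top_iff]
          intro x _
          obtain ⟨y, hy⟩ := heq x
          rw [← add_sub_cancel (φ y) x]
          refine Submodule.add_mem_sup ⟨_, rfl⟩ ?_
          rw [LinearMap.mem_ker, map_sub, ← hy]; simp
      rcases hM.2 _ _ hc with h | h
      · exact hφ0 (LinearMap.range_eq_bot.1 h)
      · have h1 := LinearMap.ker_eq_bot.1 h
        exact hφb ⟨h1, surj_of_len φ h1 le_rfl⟩
    have hIK : LinearMap.range φ ≤ LinearMap.ker φ := by
      rintro _ ⟨x, rfl⟩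
      exact LinearMap.congr_fun hsq x
    rcases hY.cases hM with hMY | hMX
    · -- torsion-free case
      let φ' : (M ⧸ LinearMap.range φ) →ₗ[R] M := (LinearMap.range φ).liftQ φ hIK
      have hφ' : φ' ∘ₗ (LinearMap.range φ).mkQ = φ := Submodule.liftQ_mkQ _ _ _
      obtain ⟨C, i, r, hir, hP, hC⟩ := exists_indec_retract (M := M ⧸ LinearMap.range φ)
        (fun e => φ' ∘ₗ e ≠ 0) (by
          intro h
          apply hφ0
          rw [← hφ']
          rw [LinearMap.comp_id] at h
          rw [h, LinearMap.zero_comp]) (by simp) (by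
          intro a b hab
          by_contra hcon
          push Not at hcon
          exact hab (by rw [LinearMap.comp_add, hcon.1, hcon.2, add_zero]))
      have hrs : Function.Surjective r := fun c => ⟨i c, LinearMap.congr_fun hir c⟩
      have hrqs : Function.Surjective (r ∘ₗ (LinearMap.range φ).mkQ) :=
        hrs.comp (Submodule.mkQ_surjective _)
      haveI : Module.Finite R C := Module.Finite.of_surjective r hrs
      let u : C →ₗ[R] M := φ' ∘ₗ i
      have hu0 : u ≠ 0 := by
        intro h
        apply hP
        change u ∘ₗ r = 0
        rw [h, LinearMap.zero_comp]
      have hφ'r : ∀ z, φ' z ∈ LinearMap.range φ := by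
        intro z
        obtain ⟨x, rfl⟩ := Submodule.mkQ_surjective _ z
        exact ⟨x, (LinearMap.congr_fun hφ' x).symm⟩
      have hru : LinearMap.range (u ∘ₗ (r ∘ₗ (LinearMap.range φ).mkQ)) = LinearMap.range u := by
        rw [LinearMap.range_comp, LinearMap.range_eq_top.2 hrqs, Submodule.map_top]
      let u' : C →ₗ[R] LinearMap.range φ := u.codRestrict _ fun c => hφ'r _
      have hule : LinearMap.range u ≤ LinearMap.range φ := by
        rintro _ ⟨c, rfl⟩
        exact hφ'r _
      have hul1 : len R (LinearMap.range u) ≤ len R (LinearMap.range φ) :=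
        len_le_inj (Submodule.inclusion hule) (Submodule.inclusion_injective _)
      have hul2 : len R (LinearMap.range φ) ≤ len R (LinearMap.range u) := by
        rw [← hru]
        refine hmin _ ?_ (nb _ ?_)
        · intro h
          apply hu0
          rw [← LinearMap.range_eq_bot, ← hru, h, LinearMap.range_zero]
        · rw [hru]; exact hul1
      have hu's : Function.Surjective u' := by
        intro y
        obtain ⟨⟨_, c, rfl⟩, hz⟩ := surj_of_len (Submodule.inclusion hule)
          (Submodule.inclusion_injective _) hul2 y
        exact ⟨c, hz⟩
      have hClen : len R C ≤ n := by
        have h1 := len_le_surj r hrs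
        have h2 := len_quot (LinearMap.range φ)
        have h3 : len R (LinearMap.range φ) ≠ 0 := by
          intro h
          rw [len_eq_zero, Submodule.subsingleton_iff_eq_bot] at h
          exact hφ0 (LinearMap.range_eq_bot.1 h)
        omega
      have hCY : Y (ModuleCat.of R C) := by
        rcases hY.cases hC with h | h
        · exact h
        · exact absurd (h (ModuleCat.of R M) hMY u) hu0
      have hCC : ExtZ R 1 C C := key_lemma hT (ih C hClen hC) (hY.ext2Y hCY)
      have hCI : ExtZ R 1 C (LinearMap.range φ) := (ses_ker hu's).les_c hCC (hY.ext2Y hCY)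
      obtain ⟨s, hs⟩ := (ses_quot (LinearMap.range φ)).lift hCI i
      haveI := hC.1
      have := hM.retract_inj s (r ∘ₗ (LinearMap.range φ).mkQ) (by
        rw [LinearMap.comp_assoc, hs, hir])
      have hq : Function.Injective (LinearMap.range φ).mkQ := Function.Injective.of_comp this
      rw [← LinearMap.ker_eq_bot, Submodule.ker_mkQ, LinearMap.range_eq_bot] at hq
      exact hφ0 hq
    · -- torsion case
      let ψ : M →ₗ[R] LinearMap.ker φ := φ.codRestrict _ fun x => hIK ⟨x, rfl⟩
      have hψ : (LinearMap.ker φ).subtype ∘ₗ ψ = φ := LinearMap.subtype_comp_codRestrict _ _ _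
      obtain ⟨C, i, r, hir, hP, hC⟩ := exists_indec_retract (M := LinearMap.ker φ)
        (fun e => e ∘ₗ ψ ≠ 0) (by
          intro h
          apply hφ0
          rw [← hψ]
          rw [LinearMap.id_comp] at h
          rw [h, LinearMap.comp_zero]) (by simp) (by
          intro a b hab
          by_contra hcon
          push Not at hcon
          exact hab (by rw [LinearMap.add_comp, hcon.1, hcon.2, add_zero]))
      have hrs : Function.Surjective r := fun c => ⟨i c, LinearMap.congr_fun hir c⟩
      have hii : Function.Injective i := Function.LeftInverse.injective (LinearMap.congr_fun hir)
      haveI : Module.Finite R C := Module.Finite.of_surjective r hrs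
      let w : LinearMap.range φ →ₗ[R] C := r ∘ₗ Submodule.inclusion hIK
      let t : LinearMap.range φ →ₗ[R] M := (LinearMap.ker φ).subtype ∘ₗ i ∘ₗ w
      have htr : LinearMap.range (t ∘ₗ φ.rangeRestrict) = LinearMap.range t := by
        rw [LinearMap.range_comp, LinearMap.range_eq_top.2 φ.surjective_rangeRestrict,
          Submodule.map_top]
      have hwφ : w ∘ₗ φ.rangeRestrict = r ∘ₗ ψ := rfl
      have hrψ : r ∘ₗ ψ ≠ 0 := by
        intro h
        apply hP
        rw [LinearMap.comp_assoc, h, LinearMap.comp_zero]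
      have ht0 : t ∘ₗ φ.rangeRestrict ≠ 0 := by
        intro h
        apply hrψ
        ext x
        have h1 := LinearMap.congr_fun h x
        exact hii (Subtype.ext (h1.trans (by simp)))
      have htl : len R (LinearMap.range t) ≤ len R (LinearMap.range φ) :=
        len_le_surj t.rangeRestrict t.surjective_rangeRestrict
      have htinj : Function.Injective t := by
        apply inj_of_len
        rw [← htr]
        refine hmin _ ht0 (nb _ ?_)
        rw [htr]; exact htl
      have hwinj : Function.Injective w := by
        have h1 : Function.Injective (((LinearMap.ker φ).subtype ∘ₗ i) ∘ w) := htinj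
        exact h1.of_comp
      have hClen : len R C ≤ n := by
        have h1 := len_le_surj r hrs
        omega
      have hCX : ∀ N : ModuleCat.{0} R, Y N → ∀ t : C →ₗ[R] N, t = 0 := by
        rcases hY.cases hC with h | h
        · exact absurd (hMX (ModuleCat.of R C) h (r ∘ₗ ψ)) hrψ
        · exact h
      have hCC : ExtZ R 1 C C := key_lemma hT (ih C hClen hC) (hY.ext2X hCX)
      have hIC : ExtZ R 1 (LinearMap.range φ) C :=
        (ses_range hwinj).les_a hCC (hY.ext2X hCX)
      have hSES : SES (LinearMap.ker φ).subtype φ.rangeRestrict :=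
        ⟨Subtype.val_injective, φ.surjective_rangeRestrict, by
          intro x
          simp [Subtype.ext_iff]⟩
      obtain ⟨s, hs⟩ := hSES.extend hIC r
      haveI := hC.1
      have := hM.retract_inj ((LinearMap.ker φ).subtype ∘ₗ i) s (by
        rw [← LinearMap.comp_assoc, hs, hir])
      have h1 := len_le_inj s this
      have h2 := len_le_surj r hrs
      omega

theorem repFinite_of (hT : TTF R) (hY : YData R Y) : IsRepFiniteRing R := by
  obtain ⟨n, F, hF⟩ := finite_bricks hT
  refine ⟨n, F, fun M hMf hM => ?_⟩
  haveI : Module.Finite R M := hMf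
  have hI : Indec R M := by
    refine ⟨?_, ?_⟩
    · by_contra h
      rw [not_nontrivial_iff_subsingleton] at h
      exact hM.1 (ModuleCat.isZero_of_subsingleton M)
    · intro A B hAB
      have := hM.2 (ModuleCat.of R A) (ModuleCat.of R B)
        ⟨((Submodule.prodEquivOfIsCompl A B hAB).symm.trans
          (biprodEquiv (ModuleCat.of R A) (ModuleCat.of R B)).symm).toModuleIso⟩
      rcases this with h | h
      · left
        rw [← Submodule.subsingleton_iff_eq_bot]
        exact ModuleCat.subsingleton_of_isZero h
      · right
        rw [← Submodule.subsingleton_iff_eq_bot]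
        exact ModuleCat.subsingleton_of_isZero h
  obtain ⟨i, ⟨e⟩⟩ := hF M (indec_brick hT hY _ M le_rfl hI)
  exact ⟨i, ⟨e.toModuleIso⟩⟩
end ringel

/-! ### The hereditary category -/
section cat
variable {H : Type u} [Category.{v} H] [Abelian H]
attribute [local instance] Abelian.hasFiniteBiproducts

/-- short exact sequences in an abelian category -/
def SE {X E Z : H} (i : X ⟶ E) (p : E ⟶ Z) : Prop :=
  ∃ w : i ≫ p = 0, (ShortComplex.mk i p w).ShortExact

namespace SE
variable {X E Z : H} {i : X ⟶ E} {p : E ⟶ Z}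

theorem mono (h : SE i p) : Mono i := h.2.mono_f
theorem epi (h : SE i p) : Epi p := h.2.epi_g
theorem w (h : SE i p) : i ≫ p = 0 := h.1
theorem lift (h : SE i p) {A : H} (x : A ⟶ E) (hx : x ≫ p = 0) : ∃ y : A ⟶ X, y ≫ i = x := by
  obtain ⟨w, h⟩ := h
  haveI := h.mono_f
  exact ⟨h.exact.lift x hx, h.exact.lift_f x hx⟩
theorem desc (h : SE i p) {A : H} (x : E ⟶ A) (hx : i ≫ x = 0) : ∃ y : Z ⟶ A, p ≫ y = x := by
  obtain ⟨w, h⟩ := h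
  haveI := h.epi_g
  exact ⟨h.exact.desc x hx, h.exact.g_desc x hx⟩

theorem mk1 [Mono i] [Epi p] (w : i ≫ p = 0)
    (hl : ∀ (A : H) (x : A ⟶ E), x ≫ p = 0 → ∃ y : A ⟶ X, y ≫ i = x) : SE i p := by
  refine ⟨w, ?_⟩
  have : (ShortComplex.mk i p w).Exact := by
    apply ShortComplex.exact_of_f_is_kernel
    exact KernelFork.IsLimit.ofι _ _ (fun {A} x hx => (hl A x hx).choose)
      (fun {A} x hx => (hl A x hx).choose_spec)
      (fun {A} x hx m hm => by
        rw [← cancel_mono i]; exact hm.trans (hl A x hx).choose_spec.symm)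
  exact { exact := this, mono_f := ‹_›, epi_g := ‹_› }

theorem mk2 [Mono i] [Epi p] (w : i ≫ p = 0)
    (hl : ∀ (A : H) (x : E ⟶ A), i ≫ x = 0 → ∃ y : Z ⟶ A, p ≫ y = x) : SE i p := by
  refine ⟨w, ?_⟩
  have : (ShortComplex.mk i p w).Exact := by
    apply ShortComplex.exact_of_g_is_cokernel
    exact CokernelCofork.IsColimit.ofπ _ _ (fun {A} x hx => (hl A x hx).choose)
      (fun {A} x hx => (hl A x hx).choose_spec)
      (fun {A} x hx m hm => by
        rw [← cancel_epi p]; exact hm.trans (hl A x hx).choose_spec.symm)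
  exact { exact := this, mono_f := ‹_›, epi_g := ‹_› }

theorem of_mono (i : X ⟶ E) [Mono i] : SE i (cokernel.π i) :=
  mk2 (cokernel.condition i) fun A x hx => ⟨cokernel.desc i x hx, cokernel.π_desc _ _ _⟩

theorem of_epi (p : E ⟶ Z) [Epi p] : SE (kernel.ι p) p :=
  mk1 (kernel.condition p) fun A x hx => ⟨kernel.lift p x hx, kernel.lift_ι _ _ _⟩

theorem section_of_retraction (h : SE i p) (ρ : E ⟶ X) (hρ : i ≫ ρ = 𝟙 X) :
    ∃ s : Z ⟶ E, s ≫ p = 𝟙 Z := by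
  obtain ⟨s, hs⟩ := h.desc (𝟙 E - ρ ≫ i) (by
    rw [Preadditive.comp_sub, ← Category.assoc, hρ]; simp)
  refine ⟨s, ?_⟩
  haveI := h.epi
  rw [← cancel_epi p, ← Category.assoc, hs]
  simp [h.w]

theorem retraction_of_section (h : SE i p) (s : Z ⟶ E) (hs : s ≫ p = 𝟙 Z) :
    ∃ ρ : E ⟶ X, i ≫ ρ = 𝟙 X := by
  obtain ⟨ρ, hρ⟩ := h.lift (𝟙 E - p ≫ s) (by
    rw [Preadditive.sub_comp, Category.assoc, hs]; simp)
  refine ⟨ρ, ?_⟩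
  haveI := h.mono
  rw [← cancel_mono i, Category.assoc, hρ]
  rw [Preadditive.comp_sub, ← Category.assoc, h.w]; simp

theorem pushout (h : SE i p) {Y : H} (t : X ⟶ Y) :
    ∃ (P : H) (j : Y ⟶ P) (q : P ⟶ Z) (s : E ⟶ P), SE j q ∧ i ≫ s = t ≫ j ∧ s ≫ q = p := by
  haveI := h.mono
  haveI := h.epi
  let q : Limits.pushout i t ⟶ Z := pushout.desc p 0 (by rw [h.w, comp_zero])
  have hq1 : pushout.inl i t ≫ q = p := pushout.inl_desc _ _ _
  have hq2 : pushout.inr i t ≫ q = 0 := pushout.inr_desc _ _ _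
  haveI : Epi q := epi_of_epi_fac hq1
  refine ⟨Limits.pushout i t, pushout.inr i t, q, pushout.inl i t, mk2 hq2 ?_,
    pushout.condition, hq1⟩
  intro A x hx
  obtain ⟨y, hy⟩ := h.desc (pushout.inl i t ≫ x) (by
    rw [← Category.assoc, pushout.condition, Category.assoc, hx, comp_zero])
  refine ⟨y, ?_⟩
  apply pushout.hom_ext
  · rw [← Category.assoc, hq1, hy]
  · rw [← Category.assoc, hq2, hx, zero_comp]

theorem pullback (h : SE i p) {Y : H} (t : Y ⟶ Z) :
    ∃ (P : H) (j : X ⟶ P) (q : P ⟶ Y) (s : P ⟶ E), SE j q ∧ j ≫ s = i ∧ s ≫ p = q ≫ t := by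
  haveI := h.mono
  haveI := h.epi
  let j : X ⟶ Limits.pullback p t := pullback.lift i 0 (by rw [h.w, zero_comp])
  have hj1 : j ≫ pullback.fst p t = i := pullback.lift_fst _ _ _
  have hj2 : j ≫ pullback.snd p t = 0 := pullback.lift_snd _ _ _
  haveI : Mono j := mono_of_mono_fac hj1
  refine ⟨Limits.pullback p t, j, pullback.snd p t, pullback.fst p t, mk1 hj2 ?_, hj1,
    pullback.condition⟩
  intro A x hx
  obtain ⟨y, hy⟩ := h.lift (x ≫ pullback.fst p t) (by
    rw [Category.assoc, pullback.condition, ← Category.assoc, hx, zero_comp])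
  refine ⟨y, ?_⟩
  apply pullback.hom_ext
  · rw [Category.assoc, hj1, hy]
  · rw [Category.assoc, hj2, hx, comp_zero]
end SE

/-- every extension of `T` by `X` splits -/
def VT (T X : H) : Prop :=
  ∀ (E : H) (i : X ⟶ E) (p : E ⟶ T), SE i p → ∃ s : T ⟶ E, s ≫ p = 𝟙 T

variable (R) in
/-- the tilting situation -/
class TS (T : H) where
  [mod : ∀ X : H, Module R (T ⟶ X)]
  ε : R ≃+ (T ⟶ T)
  smul_def : ∀ (X : H) (r : R) (x : T ⟶ X), r • x = ε r ≫ x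
  fin : ∀ X : H, Module.Finite R (T ⟶ X)
  her : ∀ (X Y Z E : H) (g : X ⟶ Y) (i : Y ⟶ E) (p : E ⟶ Z), Epi g → SE i p →
    ∃ (E' : H) (i' : X ⟶ E') (p' : E' ⟶ Z) (φ : E' ⟶ E), SE i' p' ∧ i' ≫ φ = g ≫ i ∧ φ ≫ p = p'
  rigid : VT T T
  gen : ∀ X : H, (∀ f : T ⟶ X, f = 0) → VT T X → IsZero X

theorem VT.extend {T X : H} (h : VT T X) {Z E : H} {i : Z ⟶ E} {p : E ⟶ T} (hs : SE i p)
    (t : Z ⟶ X) : ∃ s : E ⟶ X, i ≫ s = t := by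
  obtain ⟨P, j, q, s, hjq, h1, h2⟩ := hs.pushout t
  obtain ⟨σ, hσ⟩ := h P j q hjq
  obtain ⟨ρ, hρ⟩ := hjq.retraction_of_section σ hσ
  exact ⟨s ≫ ρ, by rw [← Category.assoc, h1, Category.assoc, hρ, Category.comp_id]⟩

theorem VT.lift {T X : H} (h : VT T X) {E Z : H} {i : X ⟶ E} {p : E ⟶ Z} (hs : SE i p)
    (t : T ⟶ Z) : ∃ s : T ⟶ E, s ≫ p = t := by
  obtain ⟨P, j, q, s, hjq, h1, h2⟩ := hs.pullback t
  obtain ⟨σ, hσ⟩ := h P j q hjq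
  exact ⟨σ ≫ s, by rw [Category.assoc, h2, ← Category.assoc, hσ, Category.id_comp]⟩

/-- powers of `T` -/
abbrev pw (T : H) (n : ℕ) : H := ⨁ (fun _ : Fin n => T)

theorem VT.ker {T Z T0 X : H} {z : Z ⟶ T0} {p : T0 ⟶ X} (hs : SE z p) (h : VT T T0)
    (hsur : ∀ y : T ⟶ X, ∃ x : T ⟶ T0, x ≫ p = y) : VT T Z := by
  intro E i q hE
  obtain ⟨u, hu⟩ := h.extend hE z
  obtain ⟨y, hy⟩ := hE.desc (u ≫ p) (by rw [← Category.assoc, hu, hs.w])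
  obtain ⟨x, hx⟩ := hsur y
  obtain ⟨ρ, hρ⟩ := hs.lift (u - q ≫ x) (by
    rw [Preadditive.sub_comp, Category.assoc, hx, hy, sub_self])
  refine hE.section_of_retraction ρ ?_
  haveI := hs.mono
  rw [← cancel_mono z, Category.assoc, hρ, Preadditive.comp_sub, hu, ← Category.assoc, hE.w]
  simp

section TS
variable (R) (T : H) [TS R T]
attribute [local instance] TS.mod TS.fin

/-- functor Hom(T,-) on maps -/
def hm {X Y : H} (f : X ⟶ Y) : (T ⟶ X) →ₗ[R] (T ⟶ Y) where
  toFun x := x ≫ f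
  map_add' x y := Preadditive.add_comp _ _ _ _ _ _
  map_smul' r x := by simp [TS.smul_def]

@[simp] theorem hm_apply {X Y : H} (f : X ⟶ Y) (x : T ⟶ X) : hm R T f x = x ≫ f := rfl

theorem TS.smul_comp {X Y : H} (r : R) (x : T ⟶ X) (f : X ⟶ Y) : (r • x) ≫ f = r • (x ≫ f) := by
  simp [TS.smul_def]

theorem TS.comp_eq {X : H} (y : T ⟶ T) (x : T ⟶ X) : y ≫ x = (TS.ε (R := R)).symm y • x := by
  rw [TS.smul_def]; simp

theorem TS.VT_pw (R : Type) [Ring R] (T : H) [TS R T] (n : ℕ) : VT T (pw T n) := by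
  intro E i p hE
  choose s hs using fun k => (TS.rigid R (T := T)).extend hE (biproduct.π (fun _ : Fin n => T) k)
  refine hE.section_of_retraction (biproduct.lift s) ?_
  apply biproduct.hom_ext
  intro k
  simp [hs]

theorem TS.VT_quot (R : Type) [Ring R] (T : H) [TS R T] {X Y : H} (g : X ⟶ Y) [Epi g] (hX : VT T X) : VT T Y := by
  intro E i p hE
  obtain ⟨E', i', p', φ, h1, h2, h3⟩ := TS.her R T X Y T E g i p inferInstance hE
  obtain ⟨s, hs⟩ := hX E' i' p' h1
  exact ⟨s ≫ φ, by rw [Category.assoc, h3, hs]⟩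

/-- a map out of a power of `T` is onto on Hom(T,-) -/
def HS {X Y : H} (p : X ⟶ Y) : Prop := ∀ y : T ⟶ Y, ∃ x : T ⟶ X, x ≫ p = y

theorem TS.epi_of_HS (R : Type) [Ring R] (T : H) [TS R T] {X : H} {n : ℕ} (p : pw T n ⟶ X) (hX : VT T X) (hp : HS T p) : Epi p := by
  let J := Abelian.image p
  have hJ : VT T J := TS.VT_quot R T (Abelian.factorThruImage p) (TS.VT_pw R T n)
  have hse := SE.of_mono (Abelian.image.ι p)
  have h0 : IsZero (cokernel (Abelian.image.ι p)) := by
    refine TS.gen R (T := T) _ ?_ (TS.VT_quot R T (cokernel.π (Abelian.image.ι p)) hX)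
    intro f
    obtain ⟨s, rfl⟩ := hJ.lift hse f
    obtain ⟨x, rfl⟩ := hp s
    have h3 : (Abelian.factorThruImage p ≫ Abelian.image.ι p) ≫
        cokernel.π (Abelian.image.ι p) = 0 := by
      rw [Category.assoc, hse.w, comp_zero]
    have h4 : p ≫ cokernel.π (Abelian.image.ι p) = 0 :=
      (congrArg (· ≫ cokernel.π (Abelian.image.ι p)) (Abelian.image.fac p)).symm.trans h3
    rw [Category.assoc, h4, comp_zero]
  haveI : Epi (Abelian.image.ι p) := Preadditive.epi_of_isZero_cokernel _ h0
  rw [← Abelian.image.fac p]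
  exact epi_comp _ _

theorem TS.pw_expand {X : H} {n : ℕ} (y : T ⟶ pw T n) (f : pw T n ⟶ X) :
    y ≫ f = ∑ j, (TS.ε (R := R)).symm (y ≫ biproduct.π _ j) • (biproduct.ι (fun _ => T) j ≫ f) := by
  have h : f = ∑ j, biproduct.π (fun _ : Fin n => T) j ≫ biproduct.ι (fun _ => T) j ≫ f := by
    simp only [← Category.assoc]
    rw [← Preadditive.sum_comp, biproduct.total, Category.id_comp]
  conv_lhs => rw [h]
  rw [Preadditive.comp_sum]
  refine Finset.sum_congr rfl fun j _ => ?_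
  rw [← TS.comp_eq, Category.assoc]

theorem TS.exists_HS (R : Type) [Ring R] (T : H) [TS R T] (X : H) : ∃ (n : ℕ) (p : pw T n ⟶ X), HS T p := by
  obtain ⟨n, q, hq⟩ := Module.Finite.exists_fin' R (T ⟶ X)
  refine ⟨n, biproduct.desc fun j => q (Pi.single j 1), fun y => ?_⟩
  obtain ⟨c, rfl⟩ := hq y
  refine ⟨biproduct.lift fun j => TS.ε (c j), ?_⟩
  rw [TS.pw_expand R]
  simp only [biproduct.lift_π, AddEquiv.symm_apply_apply, biproduct.ι_desc]
  conv_rhs => rw [pi_eq_sum_univ' c]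
  simp only [map_sum, map_smul]

theorem TS.full {X X' : H} (hX : VT T X) (α : (T ⟶ X) →ₗ[R] (T ⟶ X')) :
    ∃ a : X ⟶ X', α = hm R T a := by
  obtain ⟨n, p, hp⟩ := TS.exists_HS R T X
  haveI := TS.epi_of_HS R T p hX hp
  have hse := SE.of_epi p
  have hZ : VT T (kernel p) := VT.ker hse (TS.VT_pw R T n) hp
  obtain ⟨m, p2, hp2⟩ := TS.exists_HS R T (kernel p)
  haveI := TS.epi_of_HS R T p2 hZ hp2
  let b : pw T n ⟶ X' := biproduct.desc fun j => α (biproduct.ι (fun _ : Fin n => T) j ≫ p)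
  have hb : ∀ y : T ⟶ pw T n, y ≫ b = α (y ≫ p) := by
    intro y
    rw [TS.pw_expand R T y b, TS.pw_expand R T y p, map_sum]
    refine Finset.sum_congr rfl fun j _ => ?_
    rw [map_smul]
    simp [b]
  have h1 : p2 ≫ kernel.ι p ≫ b = 0 := by
    apply biproduct.hom_ext'
    intro k
    rw [← Category.assoc, ← Category.assoc, hb]
    simp
  have h2 : kernel.ι p ≫ b = 0 := by
    rw [← cancel_epi p2, h1, comp_zero]
  obtain ⟨a, ha⟩ := hse.desc b h2
  refine ⟨a, ?_⟩
  ext x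
  obtain ⟨y, rfl⟩ := hp x
  rw [hm_apply, Category.assoc, ha, hb]
end TS
end cat

section cat2
variable {H : Type u} [Category.{v} H] [Abelian H]
attribute [local instance] Abelian.hasFiniteBiproducts
attribute [local instance] TS.mod TS.fin

/-- torsion-free class -/
def YC (R : Type) [Ring R] (T : H) [TS R T] (M : ModuleCat.{0} R) : Prop :=
  ∃ X : H, VT T X ∧ Nonempty (M ≃ₗ[R] (T ⟶ X))

/-- Hom(T,T^n) is free -/
def pwEquiv (R : Type) [Ring R] (T : H) [TS R T] (n : ℕ) : (T ⟶ pw T n) ≃ₗ[R] (Fin n → R) where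
  toFun y j := (TS.ε (R := R)).symm (y ≫ biproduct.π _ j)
  invFun c := biproduct.lift fun j => TS.ε (c j)
  map_add' x y := by ext j; simp
  map_smul' r x := by
    ext j
    simp only [RingHom.id_apply, Pi.smul_apply, smul_eq_mul]
    apply (TS.ε (R := R) (T := T)).injective
    rw [AddEquiv.apply_symm_apply, TS.smul_comp, TS.smul_def]
    have h : ∀ a : R, TS.ε (R := R) (T := T) a = a • 𝟙 T := fun a => by
      rw [TS.smul_def]; simp
    rw [h (r * _), mul_smul, ← h, AddEquiv.apply_symm_apply, TS.smul_def]
  left_inv y := by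
    apply biproduct.hom_ext
    intro j
    simp
  right_inv c := by ext j; simp

theorem YC.split [ArtAlg R] (T : H) [TS R T] (M : ModuleCat.{0} R) (hM : Module.Finite R M) :
    ∃ A B : Submodule R M, IsCompl A B ∧
    YC R T (ModuleCat.of R A) ∧ ∀ N : ModuleCat.{0} R, YC R T N → ∀ t : B →ₗ[R] N, t = 0 := by
  haveI : IsArtinianRing R := ArtAlg.artin
  obtain ⟨n, q, hq⟩ := Module.Finite.exists_fin' R M
  let θ : (T ⟶ pw T n) →ₗ[R] M := q ∘ₗ (pwEquiv R T n).toLinearMap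
  have hθ : Function.Surjective θ := hq.comp (pwEquiv R T n).surjective
  haveI : IsNoetherian R (T ⟶ pw T n) := isNoetherian_of_isNoetherianRing_of_finite _ _
  obtain ⟨m, q1, hq1⟩ := Module.Finite.exists_fin' R (LinearMap.ker θ)
  let f : pw T m ⟶ pw T n := biproduct.desc fun j => ((q1 (Pi.single j 1) : LinearMap.ker θ) : T ⟶ pw T n)
  have hf : ∀ u : T ⟶ pw T m, u ≫ f = (q1 (pwEquiv R T m u) : LinearMap.ker θ) := by
    intro u
    rw [TS.pw_expand R T u f]
    conv_rhs => rw [pi_eq_sum_univ' (pwEquiv R T m u)]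
    simp only [map_sum, map_smul, Submodule.coe_sum, Submodule.coe_smul]
    refine Finset.sum_congr rfl fun j _ => ?_
    congr 1
    simp [f]
  have hf1 : ∀ u : T ⟶ pw T m, θ (u ≫ f) = 0 := fun u => by rw [hf]; exact (q1 _).2
  have hf2 : ∀ y, θ y = 0 → ∃ u : T ⟶ pw T m, u ≫ f = y := by
    intro y hy
    obtain ⟨c, hc⟩ := hq1 ⟨y, hy⟩
    refine ⟨(pwEquiv R T m).symm c, ?_⟩
    rw [hf, LinearEquiv.apply_symm_apply, hc]
  -- image and cokernel
  let e := Abelian.factorThruImage f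
  let ι := Abelian.image.ι f
  have hei : e ≫ ι = f := Abelian.image.fac f
  have hse : SE ι (cokernel.π ι) := SE.of_mono ι
  have hI : VT T (Abelian.image f) := TS.VT_quot R T e (TS.VT_pw R T m)
  have hX : VT T (cokernel ι) := TS.VT_quot R T (cokernel.π ι) (TS.VT_pw R T n)
  let c := cokernel.π ι
  have hfc : f ≫ c = 0 := by
    have h3 : (e ≫ ι) ≫ c = 0 := by
      rw [Category.assoc]; exact (congrArg (e ≫ ·) hse.w).trans comp_zero
    exact (congrArg (· ≫ c) hei).symm.trans h3
  obtain ⟨E', i', p', φ, hE, h1, h2⟩ := TS.her R T _ _ _ _ e ι c inferInstance hse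
  rw [hei] at h1
  have hp' : Function.Surjective (hm R T p') := fun y => (TS.VT_pw R T m).lift hE y
  let a : (T ⟶ E') →ₗ[R] M := θ ∘ₗ hm R T φ
  let b : (T ⟶ Abelian.image f) →ₗ[R] M := θ ∘ₗ hm R T ι
  have hker1 : ∀ y : T ⟶ E', y ≫ p' = 0 → a y = 0 := by
    intro y hy
    obtain ⟨u, rfl⟩ := hE.lift y hy
    change θ ((u ≫ i') ≫ φ) = 0
    rw [Category.assoc, h1, hf1]
  have hker : LinearMap.ker a = LinearMap.ker (hm R T p') := by
    ext y
    rw [LinearMap.mem_ker, LinearMap.mem_ker]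
    constructor
    · intro hy
      obtain ⟨u, hu⟩ := hf2 _ hy
      rw [hm_apply] at hu ⊢
      rw [← h2, ← Category.assoc, ← hu, Category.assoc, hfc, comp_zero]
    · exact hker1 y
  refine ⟨LinearMap.range a, LinearMap.range b, ⟨?_, ?_⟩, ⟨cokernel ι, hX, ⟨?_⟩⟩, ?_⟩
  · rw [Submodule.disjoint_def]
    rintro _ ⟨y, rfl⟩ ⟨u, hu⟩
    obtain ⟨w, hw⟩ := hf2 (y ≫ φ - u ≫ ι) (by
      rw [map_sub, sub_eq_zero]; exact hu.symm)
    apply hker1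
    have h3 := congrArg (· ≫ c) hw
    simp only [Category.assoc, hfc, comp_zero, Preadditive.sub_comp, h2] at h3
    have h4 : ι ≫ c = 0 := hse.w
    rw [h4, comp_zero, sub_zero] at h3
    exact h3.symm
  · rw [codisjoint_iff, eq_top_iff]
    intro x _
    obtain ⟨y, rfl⟩ := hθ x
    obtain ⟨y', hy'⟩ := hp' (y ≫ c)
    obtain ⟨u, hu⟩ := hse.lift (y - y' ≫ φ) (by
      rw [Preadditive.sub_comp, Category.assoc]
      rw [hm_apply] at hy'
      change y ≫ c - y' ≫ φ ≫ c = 0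
      rw [h2, hy', sub_self])
    rw [← add_sub_cancel (y' ≫ φ) y, map_add, ← hu]
    exact Submodule.add_mem_sup ⟨y', rfl⟩ ⟨u, rfl⟩
  · exact (a.quotKerEquivRange.symm.trans (Submodule.quotEquivOfEq _ _ hker)).trans
      ((hm R T p').quotKerEquivOfSurjective hp')
  · rintro N ⟨X', hX', ⟨eN⟩⟩ t
    obtain ⟨α, hα⟩ := TS.full R T hI (eN.toLinearMap ∘ₗ t ∘ₗ b.rangeRestrict)
    have h5 : e ≫ α = 0 := by
      apply biproduct.hom_ext'
      intro k
      rw [comp_zero, ← Category.assoc]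
      have h6 := LinearMap.congr_fun hα (biproduct.ι (fun _ : Fin m => T) k ≫ e)
      rw [hm_apply] at h6
      refine h6.symm.trans ?_
      have h7 : b.rangeRestrict (biproduct.ι (fun _ : Fin m => T) k ≫ e) = 0 := by
        apply Subtype.ext
        change θ ((biproduct.ι (fun _ : Fin m => T) k ≫ e) ≫ ι) = 0
        rw [Category.assoc, hei, hf1]
      simp only [LinearMap.comp_apply]
      rw [h7, map_zero, map_zero]
    have h8 : α = 0 := by rw [← cancel_epi e, h5, comp_zero]
    ext1 z
    obtain ⟨y, rfl⟩ := b.surjective_rangeRestrict z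
    apply eN.injective
    have h6 := LinearMap.congr_fun hα y
    rw [h8, hm_apply, comp_zero] at h6
    rw [LinearMap.zero_apply, map_zero]
    exact h6

theorem YC.pd (T : H) [TS R T] (M : ModuleCat.{0} R) (h : YC R T M) :
    ∃ (n : ℕ) (π : (Fin n → R) →ₗ[R] M),
    Function.Surjective π ∧ Module.Projective R (LinearMap.ker π) := by
  obtain ⟨X, hX, ⟨eM⟩⟩ := h
  obtain ⟨n, p, hp⟩ := TS.exists_HS R T X
  haveI := TS.epi_of_HS R T p hX hp
  have hse := SE.of_epi p
  have hZ : VT T (kernel p) := VT.ker hse (TS.VT_pw R T n) hp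
  obtain ⟨m, p2, hp2⟩ := TS.exists_HS R T (kernel p)
  haveI := TS.epi_of_HS R T p2 hZ hp2
  obtain ⟨E', i', p', φ, hE, h1, h2⟩ := TS.her R T _ _ _ _ p2 _ p inferInstance hse
  have hsec : ∀ j : Fin n, ∃ σ : T ⟶ E', σ ≫ φ = biproduct.ι (fun _ : Fin n => T) j := by
    intro j
    obtain ⟨y, hy⟩ := (TS.VT_pw R T m).lift hE (biproduct.ι (fun _ : Fin n => T) j ≫ p)
    obtain ⟨w, hw⟩ := hse.lift (biproduct.ι (fun _ : Fin n => T) j - y ≫ φ) (by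
      rw [Preadditive.sub_comp, Category.assoc, h2, hy, sub_self])
    obtain ⟨t, rfl⟩ := hp2 w
    refine ⟨y + t ≫ i', ?_⟩
    rw [Preadditive.add_comp, Category.assoc, h1, ← Category.assoc, hw]
    abel
  choose σ hσ using hsec
  let s0 : pw T n ⟶ E' := biproduct.desc σ
  have hs0 : s0 ≫ φ = 𝟙 _ := by
    apply biproduct.hom_ext'
    intro j
    rw [← Category.assoc, biproduct.ι_desc, hσ, Category.comp_id]
  obtain ⟨s, hs⟩ := hE.lift (kernel.ι p ≫ s0) (by
    rw [← h2, Category.assoc, ← Category.assoc s0, hs0, Category.id_comp, kernel.condition])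
  have hs2 : s ≫ p2 = 𝟙 _ := by
    rw [← cancel_mono (kernel.ι p), Category.assoc, ← h1, ← Category.assoc, hs, Category.assoc, hs0,
      Category.comp_id, Category.id_comp]
  haveI : Module.Projective R (T ⟶ pw T m) := Module.Projective.of_equiv (pwEquiv R T m).symm
  haveI : Module.Projective R (T ⟶ kernel p) := by
    refine Module.Projective.of_split (hm R T s) (hm R T p2) ?_
    ext x
    simp [hs2]
  let g := (hm R T p) ∘ₗ (pwEquiv R T n).symm.toLinearMap
  refine ⟨n, eM.symm.toLinearMap ∘ₗ g, ?_, ?_⟩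
  · intro y
    obtain ⟨x, hx⟩ := hp (eM y)
    refine ⟨pwEquiv R T n x, ?_⟩
    change eM.symm ((pwEquiv R T n).symm (pwEquiv R T n x) ≫ p) = y
    rw [LinearEquiv.symm_apply_apply, hx, LinearEquiv.symm_apply_apply]
  · let k : (T ⟶ kernel p) →ₗ[R] LinearMap.ker (eM.symm.toLinearMap ∘ₗ g) :=
      ((pwEquiv R T n).toLinearMap ∘ₗ hm R T (kernel.ι p)).codRestrict _ (by
        intro x
        simp [g])
    refine Module.Projective.of_equiv (LinearEquiv.ofBijective k ⟨?_, ?_⟩)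
    · intro x y hxy
      have := (pwEquiv R T n).injective (congrArg Subtype.val hxy)
      rw [hm_apply, hm_apply] at this
      exact (cancel_mono _).1 this
    · rintro ⟨x, hx⟩
      have hx' : (pwEquiv R T n).symm x ≫ p = 0 := by
        have h3 : eM.symm (g x) = 0 := hx
        rw [← map_zero eM.symm] at h3
        exact eM.symm.injective h3
      obtain ⟨y, hy⟩ := hse.lift _ hx'
      refine ⟨y, Subtype.ext ?_⟩
      change pwEquiv R T n (y ≫ kernel.ι p) = x
      rw [hy, LinearEquiv.apply_symm_apply]

theorem YC.data [ArtAlg R] (T : H) [TS R T] : YData R (YC R T) where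
  iso := by
    rintro M N e ⟨X, hX, ⟨f⟩⟩
    exact ⟨X, hX, ⟨e.symm.trans f⟩⟩
  self := by
    refine ⟨T, TS.rigid R, ⟨?_⟩⟩
    exact { TS.ε (R := R) (T := T) with
      map_smul' := fun r x => by
        have h : ∀ a : R, TS.ε (R := R) (T := T) a = a • 𝟙 T := fun a => by
          rw [TS.smul_def]; simp
        change TS.ε (R := R) (T := T) (r * x) = r • TS.ε (R := R) (T := T) x
        rw [h, h, mul_smul] }
  split := YC.split T
  pd := fun M _ h => YC.pd T M h
end cat2

theorem final_aux (K Λ : Type) [Field K] [Ring Λ] [Algebra K Λ] [FiniteDimensional K Λ]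
    (hq : IsQuasitilted.{u, v} K Λ) (ht : IsTauTiltingFinite Λ) : IsRepFinite Λ := by
  obtain ⟨W⟩ := hq
  letI := W.cat
  letI := W.ab
  letI := W.lin
  obtain ⟨φ, hφ⟩ := W.endIso
  letI iM : ∀ X : W.H, Module Λᵐᵒᵖ (W.T ⟶ X) := fun X =>
    { smul := fun r x => (φ.symm r.unop : W.T ⟶ W.T) ≫ x
      one_smul := fun x => by
        change (φ.symm 1 : W.T ⟶ W.T) ≫ x = x
        rw [map_one]; exact Category.id_comp x
      mul_smul := fun r s x => by
        change (φ.symm (s.unop * r.unop) : W.T ⟶ W.T) ≫ x =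
          (φ.symm r.unop : W.T ⟶ W.T) ≫ (φ.symm s.unop : W.T ⟶ W.T) ≫ x
        rw [map_mul]; exact Category.assoc _ _ _
      smul_zero := fun r => comp_zero
      smul_add := fun r x y => Preadditive.comp_add _ _ _ _ _ _
      add_smul := fun r s x => by
        change (φ.symm (r.unop + s.unop) : W.T ⟶ W.T) ≫ x = _
        rw [map_add]; exact Preadditive.add_comp _ _ _ _ _ _
      zero_smul := fun x => by
        change (φ.symm 0 : W.T ⟶ W.T) ≫ x = 0
        rw [map_zero]; exact zero_comp }
  have hfin : ∀ X : W.H, Module.Finite Λᵐᵒᵖ (W.T ⟶ X) := by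
    intro X
    obtain ⟨S, hS⟩ := (W.homFinite W.T X).fg_top
    refine ⟨⟨S, ?_⟩⟩
    rw [eq_top_iff]
    intro x _
    have hx : x ∈ Submodule.span K (S : Set (W.T ⟶ X)) := by rw [hS]; trivial
    induction hx using Submodule.span_induction with
    | mem y hy => exact Submodule.subset_span hy
    | zero => exact Submodule.zero_mem _
    | add y z _ _ h1 h2 => exact Submodule.add_mem _ (h1 trivial) (h2 trivial)
    | smul k y _ h =>
      have h2 : k • y = (MulOpposite.op (algebraMap K Λ k) : Λᵐᵒᵖ) • y := by
        change k • y = (φ.symm (algebraMap K Λ k) : W.T ⟶ W.T) ≫ y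
        rw [← hφ k, RingEquiv.symm_apply_apply]
        rw [Linear.smul_comp, Category.id_comp]
      rw [h2]
      exact Submodule.smul_mem _ _ (h trivial)
  letI : TS Λᵐᵒᵖ W.T :=
    { mod := iM
      ε := (MulOpposite.opAddEquiv (α := Λ)).symm.trans φ.symm.toAddEquiv
      smul_def := fun X r x => rfl
      fin := hfin
      her := by
        rintro X Y Z E g i p hg ⟨w, h⟩
        obtain ⟨E', i', p', w', ψ, h1, h2, h3⟩ := W.hereditary X Y Z E g i p w hg h
        exact ⟨E', i', p', ψ, ⟨w', h1⟩, h2, h3⟩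
      rigid := by
        rintro E i p ⟨w, h⟩
        exact W.selfExtVanish E i p w h
      gen := by
        intro X h0 h1
        exact W.generates X h0 fun E i p w h => h1 E i p ⟨w, h⟩ }
  haveI : ArtAlg Λᵐᵒᵖ := ArtAlg.of_field K
  exact repFinite_of (ttf_of ht) (YC.data W.T)


/-- Corollary 4.2 of the paper.  Every τ-tilting-finite
quasitilted algebra over an algebraically closed field is
representation-finite. -/
theorem tau_tilting_finite_quasitilted_is_rep_finite
    (K Λ : Type) [Field K] [IsAlgClosed K] [Ring Λ] [Algebra K Λ] [FiniteDimensional K Λ]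
    (hq : IsQuasitilted.{u, v} K Λ)
    (ht : IsTauTiltingFinite Λ) :
    IsRepFinite Λ := by
  exact final_aux K Λ hq ht

end PaperSilting
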